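/- arXiv:2301.03420 — 3 statements merged into one kernel-verified Lean document; each statement's English description precedes it below -/
import Mathlib

section
/- Let V = {A,B,C,D,E,F,G,Z} be an 8-element set and let F be the collection of twenty 4-element subsets {A,B,C,D}, {A,B,C,G}, {A,B,D,E}, {A,B,E,F}, {A,B,F,Z}, {A,B,G,Z}, {A,C,D,Z}, {A,C,G,Z}, {A,D,E,Z}, {A,E,F,Z}, {B,C,D,E}, {B,C,E,F}, {B,C,F,G}, {B,F,G,Z}, {C,D,E,F}, {C,D,F,G}, {C,D,G,Z}, {D,E,F,G}, {D,E,G,Z}, {E,F,G,Z} (the facets of the boundary of the 4-polytope H_8). Then for every labelling φ : V → {1,2,3,4} such that the sets {A,B,G,Z} and {C,D,E,F} are both rainbow (i.e., φ is injective on each), there exists a facet in F distinct from {A,B,G,Z} and {C,D,E,F} that is also rainbow. -/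
/-- The eight vertices of Grünbaum's polytope `H₈`. -/
abbrev H8V := Fin 8

namespace H8
def A : H8V := 0
def B : H8V := 1
def C : H8V := 2
def D : H8V := 3
def E : H8V := 4
def F : H8V := 5
def G : H8V := 6
def Z : H8V := 7

/-- The twenty facets of the boundary complex of `H₈`. -/
def facets : Finset (Finset H8V) :=
  { {A,B,C,D}, {A,B,C,G}, {A,B,D,E}, {A,B,E,F}, {A,B,F,Z},
    {A,B,G,Z}, {A,C,D,Z}, {A,C,G,Z}, {A,D,E,Z}, {A,E,F,Z},
    {B,C,D,E}, {B,C,E,F}, {B,C,F,G}, {B,F,G,Z}, {C,D,E,F},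
    {C,D,F,G}, {C,D,G,Z}, {D,E,F,G}, {D,E,G,Z}, {E,F,G,Z} }

def σ0 : Finset H8V := {A,B,G,Z}
def σ1 : Finset H8V := {C,D,E,F}

/-- A set of vertices is rainbow under a labelling `φ` if `φ` is injective on it.
Labels `1,2,3,4` are represented by `Fin 4` (label `k` being `k-1`). -/
def Rainbow (φ : H8V → Fin 4) (σ : Finset H8V) : Prop := Set.InjOn φ ↑σ

end H8

/-- Four labels are pairwise distinct. -/
def H8.R4 (a b c d : Fin 4) : Prop :=
  a ≠ b ∧ a ≠ c ∧ a ≠ d ∧ b ≠ c ∧ b ≠ d ∧ c ≠ d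

instance H8.decR4 (a b c d : Fin 4) : Decidable (H8.R4 a b c d) := by
  unfold H8.R4; infer_instance

theorem H8.rainbow_of (φ : H8V → Fin 4) (x y z w : H8V)
    (h : H8.R4 (φ x) (φ y) (φ z) (φ w)) : H8.Rainbow φ {x, y, z, w} := by
  obtain ⟨h1, h2, h3, h4, h5, h6⟩ := h
  intro p hp q hq hpq
  simp only [Finset.coe_insert, Finset.coe_singleton, Set.mem_insert_iff,
    Set.mem_singleton_iff] at hp hq
  rcases hp with rfl | rfl | rfl | rfl <;> rcases hq with rfl | rfl | rfl | rfl <;>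
    first
    | rfl
    | exact absurd hpq (by assumption)
    | exact absurd hpq.symm (by assumption)

set_option maxRecDepth 100000 in
set_option synthInstance.maxSize 4000 in
set_option synthInstance.maxHeartbeats 1000000 in
theorem H8.key : ∀ a b : Fin 4, a ≠ b → ∀ g, a ≠ g → b ≠ g → ∀ z, a ≠ z → b ≠ z → g ≠ z →
    ∀ c d : Fin 4, c ≠ d → ∀ e, c ≠ e → d ≠ e → ∀ f, c ≠ f → d ≠ f → e ≠ f →
    H8.R4 a b c d ∨
    H8.R4 a b c g ∨
    H8.R4 a b d e ∨
    H8.R4 a b e f ∨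
    H8.R4 a b f z ∨
    H8.R4 a c d z ∨
    H8.R4 a c g z ∨
    H8.R4 a d e z ∨
    H8.R4 a e f z ∨
    H8.R4 b c d e ∨
    H8.R4 b c e f ∨
    H8.R4 b c f g ∨
    H8.R4 b f g z ∨
    H8.R4 c d f g ∨
    H8.R4 c d g z ∨
    H8.R4 d e f g ∨
    H8.R4 d e g z ∨
    H8.R4 e f g z := by
  decide +kernel

open H8 in
/-- Lemma 5.1: any labelling of the vertices of `H₈` by four labels making the
facets `σ₀ = ABGZ` and `σ₁ = CDEF` rainbow makes some further facet rainbow. -/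
theorem h8_third_rainbow_facet (φ : H8V → Fin 4)
    (h0 : Rainbow φ σ0) (h1 : Rainbow φ σ1) :
    ∃ τ ∈ facets, τ ≠ σ0 ∧ τ ≠ σ1 ∧ Rainbow φ τ := by
  have n0 : ∀ x ∈ σ0, ∀ y ∈ σ0, x ≠ y → φ x ≠ φ y := fun x hx y hy hne he =>
    hne (h0 (Finset.mem_coe.2 hx) (Finset.mem_coe.2 hy) he)
  have n1 : ∀ x ∈ σ1, ∀ y ∈ σ1, x ≠ y → φ x ≠ φ y := fun x hx y hy hne he =>
    hne (h1 (Finset.mem_coe.2 hx) (Finset.mem_coe.2 hy) he)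
  have k := H8.key (φ A) (φ B) ?_ (φ G) ?_ ?_ (φ Z) ?_ ?_ ?_
    (φ C) (φ D) ?_ (φ E) ?_ ?_ (φ F) ?_ ?_ ?_
  · rcases k with h | h | h | h | h | h | h | h | h |
      h | h | h | h | h | h | h | h | h <;>
      exact ⟨_, by decide, by decide, by decide, H8.rainbow_of φ _ _ _ _ h⟩
  all_goals first
    | exact n0 _ (by decide) _ (by decide) (by decide)
    | exact n1 _ (by decide) _ (by decide) (by decide)
end

section
/- For every triangulation K of the 2-simplex Δ² and every facet (triangle) σ of K, there exists a Sperner labelling of K in which σ is the unique rainbow facet. -/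
open Geometry

/-- A (finite) triangulation of the `d`-simplex: a finite geometric simplicial
complex in `ℝ^d` whose underlying space is the convex hull of `d+1` affinely
independent points (the corners of `Δ^d`). -/
structure SimplexTriangulation (d : ℕ) where
  K : Geometry.SimplicialComplex ℝ (EuclideanSpace ℝ (Fin d))
  corner : Fin (d + 1) → EuclideanSpace ℝ (Fin d)
  indep : AffineIndependent ℝ corner
  finite : K.faces.Finite
  space_eq : K.space = convexHull ℝ (Set.range corner)

namespace SimplexTriangulation

variable {d : ℕ}

/-- Facets of the triangulation: faces with `d+1` vertices (i.e. `d`-simplices). -/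
def IsFacet (T : SimplexTriangulation d) (σ : Finset (EuclideanSpace ℝ (Fin d))) : Prop :=
  σ ∈ T.K.faces ∧ σ.card = d + 1

/-- A Sperner labelling: each corner `vᵢ` of `Δ^d` gets label `i`, and any vertex
of the triangulation lying in a face of `Δ^d` (the convex hull of a set of
corners) gets the label of one of the corners of that face. -/
def IsSperner (T : SimplexTriangulation d)
    (l : EuclideanSpace ℝ (Fin d) → Fin (d + 1)) : Prop :=
  (∀ i, l (T.corner i) = i) ∧
  ∀ x ∈ T.K.vertices, ∀ s : Set (Fin (d + 1)),
    x ∈ convexHull ℝ (T.corner '' s) → ∃ i ∈ s, l x = i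

end SimplexTriangulation

/-- A simplex is rainbow when the labelling is injective on its vertices. -/
def Rainbow {α : Type*} {m : ℕ} (l : α → Fin m) (σ : Finset α) : Prop :=
  Set.InjOn l ↑σ

namespace SpProof
open Filter Topology Real

abbrev E := EuclideanSpace ℝ (Fin 2)

/-- Identification of the plane with the complex numbers. -/
noncomputable def F (x : E) : ℂ := ⟨x 0, x 1⟩

lemma F_sub (x y : E) : F (x - y) = F x - F y := by
  apply Complex.ext <;> simp [F]

lemma F_smul (r : ℝ) (x : E) : F (r • x) = (r : ℂ) * F x := by
  apply Complex.ext <;> simp [F]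

lemma F_add (x y : E) : F (x + y) = F x + F y := by
  apply Complex.ext <;> simp [F]

lemma F_inj {x y : E} (h : F x = F y) : x = y := by
  have h0 := congrArg Complex.re h
  have h1 := congrArg Complex.im h
  ext i
  fin_cases i
  · exact h0
  · exact h1

lemma F_cont : Continuous F := by
  have : F = fun x : E => ((x 0 : ℝ) : ℂ) + ((x 1 : ℝ) : ℂ) * Complex.I := by
    funext x
    apply Complex.ext <;> simp [F]
  rw [this]
  fun_prop

lemma F_ne {x y : E} (h : x ≠ y) : F x - F y ≠ 0 := fun hz => h (F_inj (sub_eq_zero.1 hz))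

/-- The signed angle under which `p` sees the segment from `x` to `y`. -/
noncomputable def ang (p x y : E) : ℝ := Complex.arg ((F y - F p) / (F x - F p))

noncomputable def th (p x : E) : ℝ := Complex.arg (F x - F p)

noncomputable def mm (p x y : E) : ℤ := round ((ang p x y - th p y + th p x) / (2 * π))

lemma ang_eq {p x y : E} (hx : x ≠ p) (hy : y ≠ p) :
    ang p x y = th p y - th p x + 2 * π * mm p x y := by
  have h := Complex.arg_div_coe_angle (F_ne hy) (F_ne hx)
  rw [← Real.Angle.coe_sub, Real.Angle.angle_eq_iff_two_pi_dvd_sub] at h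
  obtain ⟨k, hk⟩ := h
  have hpi : (2 * π) ≠ 0 := by positivity
  have : (ang p x y - th p y + th p x) / (2 * π) = k := by
    rw [div_eq_iff hpi]
    unfold ang th
    linarith
  have hm : mm p x y = k := by unfold mm; rw [this, round_intCast]
  rw [hm]
  unfold ang th
  linarith

lemma slit_of_not_mem {p x y : E} (h : p ∉ segment ℝ x y) :
    (F y - F p) / (F x - F p) ∈ Complex.slitPlane := by
  by_contra hs
  apply h
  have hx : x ≠ p := by rintro rfl; exact h (left_mem_segment ℝ _ _)
  rw [Complex.mem_slitPlane_iff] at hs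
  push Not at hs
  obtain ⟨h1, h2⟩ := hs
  set w := (F y - F p) / (F x - F p) with hw
  have hwr : w = (w.re : ℂ) := by apply Complex.ext <;> simp [h2]
  have h3 : F y - F p = (w.re : ℂ) * (F x - F p) := by
    rw [← hwr, hw, div_mul_cancel₀ _ (F_ne hx)]
  have h4 : y - p = w.re • (x - p) := by
    apply F_inj; rw [F_smul, F_sub, F_sub, h3]
  set r := w.re
  have hr : 0 < 1 - r := by linarith
  refine ⟨-r / (1 - r), 1 / (1 - r), by apply div_nonneg <;> linarith, by positivity, by field_simp; ring, ?_⟩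
  have h5 : y = p + r • (x - p) := by rw [← h4]; abel
  have : p = (1 / (1 - r)) • ((1 - r) • p) := by
    rw [smul_smul]; field_simp; simp
  conv_rhs => rw [this]
  rw [div_eq_mul_one_div, mul_comm, ← smul_smul, ← smul_add]
  congr 1
  rw [h5]
  module

lemma ang_contAt {p x y : E} (h : p ∉ segment ℝ x y) : ContinuousAt (fun q => ang q x y) p := by
  have hx : x ≠ p := by rintro rfl; exact h (left_mem_segment ℝ _ _)
  unfold ang
  refine ContinuousAt.comp (f := fun q => (F y - F q) / (F x - F q)) (Complex.continuousAt_arg (slit_of_not_mem h)) ?_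
  exact ContinuousAt.div (by have := F_cont; fun_prop) (by have := F_cont; fun_prop) (F_ne hx)

lemma ang_pi {p x y : E} (h : p ∈ segment ℝ x y) (hx : x ≠ p) (hy : y ≠ p) : ang p x y = π := by
  obtain ⟨a, b, ha, hb, hab, rfl⟩ := h
  have ha' : a ≠ 0 := by rintro rfl; apply hy; simp at hab; simp [hab]
  have hb' : b ≠ 0 := by rintro rfl; apply hx; simp at hab; simp [hab]
  have hpa : 0 < a := lt_of_le_of_ne ha ha'.symm
  have hpb : 0 < b := lt_of_le_of_ne hb hb'.symm
  set p := a • x + b • y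
  have e1 : F y - F p = (a : ℂ) * (F y - F x) := by
    have : y - p = a • (y - x) := by
      have : b = 1 - a := by linarith
      simp only [p, this]; module
    rw [← F_sub, this, F_smul, F_sub]
  have e2 : F x - F p = -(b : ℂ) * (F y - F x) := by
    have : x - p = (-b) • (y - x) := by
      have : a = 1 - b := by linarith
      simp only [p, this]; module
    rw [← F_sub, this, F_smul, F_sub]; push_cast; ring
  have hne : F y - F x ≠ 0 := by
    intro h0
    rw [h0, mul_zero] at e1
    exact F_ne hy e1
  have : (F y - F p) / (F x - F p) = ((-(a / b) : ℝ) : ℂ) := by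
    rw [e1, e2, mul_div_mul_right _ _ hne]; push_cast
    rw [div_neg]
  unfold ang
  rw [this, Complex.arg_ofReal_of_neg]
  have : 0 < a / b := by positivity
  linarith

lemma ang_anti {p x y : E} (h : p ∉ segment ℝ x y) : ang p y x = - ang p x y := by
  have h1 := slit_of_not_mem h
  unfold ang
  rw [← inv_div, Complex.arg_inv, if_neg]
  exact (Complex.mem_slitPlane_iff_arg.1 h1).1

lemma mm_anti {p x y : E} (h : p ∉ segment ℝ x y) : mm p y x = - mm p x y := by
  have hx : x ≠ p := by rintro rfl; exact h (left_mem_segment ℝ _ _)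
  have hy : y ≠ p := by rintro rfl; exact h (right_mem_segment ℝ _ _)
  have h1 := ang_eq hx hy
  have h2 := ang_eq hy hx
  rw [ang_anti h, h1] at h2
  have hpi : (0:ℝ) < 2 * π := by positivity
  have : (mm p y x : ℝ) = - mm p x y := by
    have : 2 * π * ((mm p y x : ℝ) + mm p x y) = 0 := by linarith
    rcases mul_eq_zero.1 this with h | h <;> linarith
  exact_mod_cast this

lemma mm_self (p x : E) (hx : x ≠ p) : mm p x x = 0 := by
  have h1 := ang_eq hx hx
  have : ang p x x = 0 := by unfold ang; rw [div_self (F_ne hx)]; simp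
  rw [this] at h1
  have hpi : (2:ℝ) * π ≠ 0 := by positivity
  have : (mm p x x : ℝ) = 0 := by
    have : 2 * π * (mm p x x : ℝ) = 0 := by linarith
    exact (mul_eq_zero.1 this).resolve_left hpi
  exact_mod_cast this

/-- Points in a closed convex set away from `p`: the angle is an exact difference. -/
lemma half_plane {S : Set E} (hS : Convex ℝ S) (hS' : IsClosed S) {p : E} (hp : p ∉ S) :
    ∃ φ : E → ℝ, ∀ x ∈ S, ∀ y ∈ S, ang p x y = φ y - φ x := by
  obtain ⟨g, u, h1, h2⟩ := geometric_hahn_banach_point_closed hS hS' hp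
  let n : ℂ := ⟨g (EuclideanSpace.single 0 1), g (EuclideanSpace.single 1 1)⟩
  have hg : ∀ x : E, g x = (F x * (starRingEnd ℂ) n).re := by
    intro x
    have : x = x 0 • EuclideanSpace.single 0 (1:ℝ) + x 1 • EuclideanSpace.single 1 (1:ℝ) := by
      ext i; fin_cases i <;> simp
    conv_lhs => rw [this]
    rw [map_add, map_smul, map_smul]
    simp [F, n]
  refine ⟨fun x => Complex.arg ((F x - F p) * (starRingEnd ℂ) n), ?_⟩
  have key : ∀ x ∈ S, 0 < ((F x - F p) * (starRingEnd ℂ) n).re := by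
    intro x hx
    rw [sub_mul, Complex.sub_re, ← hg, ← hg]
    have := h2 x hx
    linarith
  intro x hx y hy
  have kx := key x hx
  have ky := key y hy
  have ax := abs_lt.1 (Complex.abs_arg_lt_pi_div_two_iff.2 (Or.inl kx))
  have ay := abs_lt.1 (Complex.abs_arg_lt_pi_div_two_iff.2 (Or.inl ky))
  set X := (F x - F p) * (starRingEnd ℂ) n with hX
  set Y := (F y - F p) * (starRingEnd ℂ) n with hY
  have hX0 : X ≠ 0 := by intro h; rw [h] at kx; simp at kx
  have hY0 : Y ≠ 0 := by intro h; rw [h] at ky; simp at ky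
  have hn : (starRingEnd ℂ) n ≠ 0 := by intro h; rw [hX, h, mul_zero] at hX0; exact hX0 rfl
  have : ang p x y = Complex.arg (Y / X) := by
    unfold ang; rw [hX, hY, mul_div_mul_right _ _ hn]
  rw [this]
  have h := Complex.arg_div_coe_angle hY0 hX0
  rw [← Real.Angle.coe_sub] at h
  have hc := congrArg Real.Angle.toReal h
  rw [Complex.arg_coe_angle_toReal_eq_arg, Real.Angle.toReal_coe_eq_self_iff.2] at hc
  · exact hc
  · constructor <;> linarith

/-- Triangles not containing `p` have zero winding. -/
lemma tri_zero {a b d p : E} (h : p ∉ convexHull ℝ ({a, b, d} : Set E)) :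
    mm p a b + mm p b d + mm p d a = 0 := by
  have hfin : ({a, b, d} : Set E).Finite := by simp
  obtain ⟨φ, hφ⟩ := half_plane (convex_convexHull ℝ _) (hfin.isClosed_convexHull ℝ) h
  have ma : a ∈ convexHull ℝ ({a, b, d} : Set E) := subset_convexHull ℝ _ (by simp)
  have mb : b ∈ convexHull ℝ ({a, b, d} : Set E) := subset_convexHull ℝ _ (by simp)
  have md : d ∈ convexHull ℝ ({a, b, d} : Set E) := subset_convexHull ℝ _ (by simp)
  have na : a ≠ p := fun e => h (e ▸ ma)
  have nb : b ≠ p := fun e => h (e ▸ mb)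
  have nd : d ≠ p := fun e => h (e ▸ md)
  have h1 := ang_eq na nb
  have h2 := ang_eq nb nd
  have h3 := ang_eq nd na
  rw [hφ _ ma _ mb] at h1
  rw [hφ _ mb _ md] at h2
  rw [hφ _ md _ ma] at h3
  have hpi : (2:ℝ) * π ≠ 0 := by positivity
  have : (2 * π) * ((mm p a b + mm p b d + mm p d a : ℤ) : ℝ) = 0 := by push_cast; linarith
  have := (mul_eq_zero.1 this).resolve_left hpi
  exact_mod_cast this

def cross (u v : ℂ) : ℝ := u.re * v.im - u.im * v.re

lemma div_im' (u v : ℂ) : (v / u).im = cross u v / Complex.normSq u := by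
  rw [Complex.div_im, cross]; ring

/-- Triangles containing `p` in their interior have nonzero winding. -/
lemma tri_ne {a b d p : E} {wa wb wd : ℝ} (ha : 0 < wa) (hb : 0 < wb) (hd : 0 < wd)
    (hs : wa + wb + wd = 1) (hp : p = wa • a + wb • b + wd • d)
    (hcr : cross (F b - F a) (F d - F a) ≠ 0) :
    mm p a b + mm p b d + mm p d a ≠ 0 := by
  have hFp : F p = wa * F a + wb * F b + wd * F d := by rw [hp, F_add, F_add, F_smul, F_smul, F_smul]
  have hre : (F p).re = wa * (F a).re + wb * (F b).re + wd * (F d).re := by rw [hFp]; simp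
  have him : (F p).im = wa * (F a).im + wb * (F b).im + wd * (F d).im := by rw [hFp]; simp
  have ewa : wa = 1 - wb - wd := by linarith
  have c1 : cross (F a - F p) (F b - F p) = wd * cross (F b - F a) (F d - F a) := by
    simp only [cross, Complex.sub_re, Complex.sub_im, hre, him, ewa]; ring
  have c2 : cross (F b - F p) (F d - F p) = wa * cross (F b - F a) (F d - F a) := by
    simp only [cross, Complex.sub_re, Complex.sub_im, hre, him, ewa]; ring
  have c3 : cross (F d - F p) (F a - F p) = wb * cross (F b - F a) (F d - F a) := by
    simp only [cross, Complex.sub_re, Complex.sub_im, hre, him, ewa]; ring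
  have na : a ≠ p := by
    rintro rfl
    rw [sub_self] at c1; simp [cross] at c1; rcases c1 with h | h
    · linarith
    · exact hcr h
  have nb : b ≠ p := by
    rintro rfl
    rw [sub_self] at c2; simp [cross] at c2; rcases c2 with h | h
    · linarith
    · exact hcr h
  have nd : d ≠ p := by
    rintro rfl
    rw [sub_self] at c3; simp [cross] at c3; rcases c3 with h | h
    · linarith
    · exact hcr h
  have h1 := ang_eq na nb
  have h2 := ang_eq nb nd
  have h3 := ang_eq nd na
  have i1 : ((F b - F p) / (F a - F p)).im = wd * cross (F b - F a) (F d - F a) / Complex.normSq (F a - F p) := by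
    rw [div_im', c1]
  have i2 : ((F d - F p) / (F b - F p)).im = wa * cross (F b - F a) (F d - F a) / Complex.normSq (F b - F p) := by
    rw [div_im', c2]
  have i3 : ((F a - F p) / (F d - F p)).im = wb * cross (F b - F a) (F d - F a) / Complex.normSq (F d - F p) := by
    rw [div_im', c3]
  have q1 := Complex.normSq_pos.2 (F_ne na)
  have q2 := Complex.normSq_pos.2 (F_ne nb)
  have q3 := Complex.normSq_pos.2 (F_ne nd)
  intro h0
  have hsum : ang p a b + ang p b d + ang p d a = 0 := by
    have : ((mm p a b + mm p b d + mm p d a : ℤ) : ℝ) = 0 := by rw [h0]; simp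
    push_cast at this
    have : 2 * π * (mm p a b + mm p b d + mm p d a : ℝ) = 0 := by rw [this]; simp
    linarith
  have pos : ∀ z : ℂ, 0 < z.im → 0 < z.arg := by
    intro z hz
    have h1 : 0 ≤ z.arg := Complex.arg_nonneg_iff.2 hz.le
    refine lt_of_le_of_ne h1 fun h => ?_
    have := Complex.arg_eq_zero_iff.1 h.symm
    linarith [this.2]
  rcases lt_or_gt_of_ne hcr with hc | hc
  · have a1 : ang p a b < 0 := Complex.arg_neg_iff.2 (by
      rw [i1]; exact div_neg_of_neg_of_pos (mul_neg_of_pos_of_neg hd hc) q1)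
    have a2 : ang p b d < 0 := Complex.arg_neg_iff.2 (by
      rw [i2]; exact div_neg_of_neg_of_pos (mul_neg_of_pos_of_neg ha hc) q2)
    have a3 : ang p d a < 0 := Complex.arg_neg_iff.2 (by
      rw [i3]; exact div_neg_of_neg_of_pos (mul_neg_of_pos_of_neg hb hc) q3)
    linarith
  · have a1 : 0 < ang p a b := pos _ (by rw [i1]; positivity)
    have a2 : 0 < ang p b d := pos _ (by rw [i2]; positivity)
    have a3 : 0 < ang p d a := pos _ (by rw [i3]; positivity)
    linarith

end SpProof

namespace SpProof
open Filter Topology Real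

lemma hb_coord {S : Set E} (hS : Convex ℝ S) (hS' : IsCompact S) {c : E} (hc : c ∉ S) :
    ∃ α β δ : ℝ, (α ^ 2 + β ^ 2 ≠ 0) ∧ 0 < δ ∧
      ∀ z ∈ S, δ ≤ α * (z 0 - c 0) + β * (z 1 - c 1) := by
  rcases S.eq_empty_or_nonempty with rfl | ⟨s, hs⟩
  · exact ⟨1, 0, 1, by norm_num, one_pos, by simp⟩
  obtain ⟨g, u, h1, h2⟩ := geometric_hahn_banach_point_closed hS hS'.isClosed hc
  have hg : ∀ x : E, g x = g (EuclideanSpace.single 0 1) * x 0 + g (EuclideanSpace.single 1 1) * x 1 := by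
    intro x
    have : x = x 0 • EuclideanSpace.single 0 (1:ℝ) + x 1 • EuclideanSpace.single 1 (1:ℝ) := by
      ext i; fin_cases i <;> simp
    conv_lhs => rw [this]
    rw [map_add, map_smul, map_smul]
    simp [mul_comm]
  have key : ∀ z ∈ S, u - g c ≤ g (EuclideanSpace.single 0 1) * (z 0 - c 0) +
      g (EuclideanSpace.single 1 1) * (z 1 - c 1) := by
    intro z hz
    have := h2 z hz
    rw [hg z] at this
    have := hg c
    linarith
  refine ⟨_, _, u - g c, ?_, by linarith, key⟩
  intro h0
  have e1 : g (EuclideanSpace.single 0 1) = 0 := by nlinarith [sq_nonneg (g (EuclideanSpace.single 0 1)), sq_nonneg (g (EuclideanSpace.single 1 1))]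
  have e2 : g (EuclideanSpace.single 1 1) = 0 := by nlinarith [sq_nonneg (g (EuclideanSpace.single 0 1)), sq_nonneg (g (EuclideanSpace.single 1 1))]
  have := key s hs
  rw [e1, e2] at this
  linarith

lemma free_ray {S₁ S₂ V : Set E} {c : E} (h1 : Convex ℝ S₁) (h1' : IsCompact S₁) (hc1 : c ∉ S₁)
    (h2 : Convex ℝ S₂) (h2' : IsCompact S₂) (hc2 : c ∉ S₂) (hV : V.Finite) (hcV : c ∉ V) :
    ∃ u : E, u ≠ 0 ∧ ∀ t : ℝ, 0 ≤ t → c + t • u ∉ S₁ ∧ c + t • u ∉ S₂ ∧ c + t • u ∉ V := by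
  obtain ⟨α₂, β₂, δ₂, hn2, hδ2, H2⟩ := hb_coord h2 h2' hc2
  have : ∃ α₁ β₁ δ₁ : ℝ, α₁ * β₂ - β₁ * α₂ ≠ 0 ∧ 0 < δ₁ ∧
      ∀ z ∈ S₁, δ₁ ≤ α₁ * (z 0 - c 0) + β₁ * (z 1 - c 1) := by
    obtain ⟨α₁, β₁, δ₁, hn1, hδ1, H1⟩ := hb_coord h1 h1' hc1
    by_cases hD : α₁ * β₂ - β₁ * α₂ = 0
    swap
    · exact ⟨α₁, β₁, δ₁, hD, hδ1, H1⟩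
    obtain ⟨M, hM⟩ := h1'.exists_bound_of_continuousOn
      (f := fun z : E => -β₂ * (z 0 - c 0) + α₂ * (z 1 - c 1)) (by fun_prop)
    have hMp : 0 < |M| + 1 := by positivity
    refine ⟨α₁ + δ₁ / (2 * (|M| + 1)) * (-β₂), β₁ + δ₁ / (2 * (|M| + 1)) * α₂, δ₁ / 2, ?_, by linarith, ?_⟩
    · have : (α₁ + δ₁ / (2 * (|M| + 1)) * (-β₂)) * β₂ - (β₁ + δ₁ / (2 * (|M| + 1)) * α₂) * α₂
        = (α₁ * β₂ - β₁ * α₂) - δ₁ / (2 * (|M| + 1)) * (α₂ ^ 2 + β₂ ^ 2) := by ring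
      rw [this, hD, zero_sub, neg_ne_zero]
      have : δ₁ / (2 * (|M| + 1)) ≠ 0 := by positivity
      exact mul_ne_zero this hn2
    · intro z hz
      have a1 := H1 z hz
      have a2 := hM z hz
      rw [Real.norm_eq_abs, abs_le] at a2
      set q := -β₂ * (z 0 - c 0) + α₂ * (z 1 - c 1) with hq
      have a3 : -(|M| + 1) ≤ q := by linarith [a2.1, le_abs_self M]
      have a4 : δ₁ / (2 * (|M| + 1)) * (-(|M| + 1)) ≤ δ₁ / (2 * (|M| + 1)) * q :=
        mul_le_mul_of_nonneg_left a3 (by positivity)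
      have a5 : δ₁ / (2 * (|M| + 1)) * (-(|M| + 1)) = - (δ₁ / 2) := by field_simp
      have : (α₁ + δ₁ / (2 * (|M| + 1)) * (-β₂)) * (z 0 - c 0) + (β₁ + δ₁ / (2 * (|M| + 1)) * α₂) * (z 1 - c 1)
        = (α₁ * (z 0 - c 0) + β₁ * (z 1 - c 1)) + δ₁ / (2 * (|M| + 1)) * q := by rw [hq]; ring
      rw [this]
      linarith
  obtain ⟨α₁, β₁, δ₁, hD, hδ1, H1⟩ := this
  set D := α₁ * β₂ - β₁ * α₂ with hDdef
  let bad : Set ℝ := (fun v : E => (α₂ * (v 0 - c 0) + β₂ * (v 1 - c 1)) / (α₁ * (v 0 - c 0) + β₁ * (v 1 - c 1))) '' V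
  have hbad : bad.Finite := hV.image _
  obtain ⟨s, hs, hsb⟩ := (Set.Ioi_infinite (0:ℝ)).exists_notMem_finite hbad
  have hs : 0 < s := hs
  let u : E := !₂[(-β₂ + s * β₁) / D, (-α₁ * s + α₂) / D]
  have u0 : u 0 = (-β₂ + s * β₁) / D := rfl
  have u1 : u 1 = (-α₁ * s + α₂) / D := rfl
  have g1 : α₁ * u 0 + β₁ * u 1 = -1 := by
    rw [u0, u1]; field_simp; rw [hDdef]; ring
  have g2 : α₂ * u 0 + β₂ * u 1 = -s := by
    rw [u0, u1]; field_simp; rw [hDdef]; ring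
  refine ⟨u, ?_, ?_⟩
  · intro h; rw [h] at g1; simp at g1
  intro t ht
  have k1 : α₁ * ((c + t • u) 0 - c 0) + β₁ * ((c + t • u) 1 - c 1) = -t := by
    have : α₁ * ((c + t • u) 0 - c 0) + β₁ * ((c + t • u) 1 - c 1) = t * (α₁ * u 0 + β₁ * u 1) := by
      simp; ring
    rw [this, g1]; ring
  have k2 : α₂ * ((c + t • u) 0 - c 0) + β₂ * ((c + t • u) 1 - c 1) = -(t * s) := by
    have : α₂ * ((c + t • u) 0 - c 0) + β₂ * ((c + t • u) 1 - c 1) = t * (α₂ * u 0 + β₂ * u 1) := by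
      simp; ring
    rw [this, g2]; ring
  refine ⟨fun h => ?_, fun h => ?_, fun h => ?_⟩
  · have := H1 _ h; rw [k1] at this; linarith
  · have := H2 _ h; rw [k2] at this
    have : 0 ≤ t * s := by positivity
    linarith
  · have ht0 : t ≠ 0 := by rintro rfl; simp at h; exact hcV h
    apply hsb
    refine ⟨_, h, ?_⟩
    simp only [k1, k2]
    field_simp

variable {G : SimpleGraph E}

noncomputable def wnd (p : E) {u v : E} (P : G.Walk u v) : ℤ :=
  (P.darts.map fun d => mm p d.fst d.snd).sum

noncomputable def asum (p : E) (L : List G.Dart) : ℝ :=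
  (L.map fun d => ang p d.fst d.snd).sum

open Classical in
noncomputable def cnt (p : E) (L : List G.Dart) : ℕ :=
  L.countP fun d => p ∈ segment ℝ d.fst d.snd

lemma asum_eq {V : Set E} (hG : ∀ x y, G.Adj x y → x ∈ V ∧ y ∈ V) {p : E} (hp : p ∉ V) {u v : E}
    (P : G.Walk u v) : asum p P.darts = th p v - th p u + 2 * π * wnd p P := by
  induction P with
  | nil => simp [asum, wnd]
  | @cons u v w h P ih =>
    have hu : u ≠ p := fun e => hp (e ▸ (hG _ _ h).1)
    have hv : v ≠ p := fun e => hp (e ▸ (hG _ _ h).2)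
    have e1 : asum p (SimpleGraph.Walk.cons h P).darts = ang p u v + asum p P.darts := by
      simp [asum]
    have e2 : wnd p (SimpleGraph.Walk.cons h P) = mm p u v + wnd p P := by
      simp [wnd]
    rw [e1, e2, ih, ang_eq hu hv]
    push_cast
    ring

lemma asum_closed {V : Set E} (hG : ∀ x y, G.Adj x y → x ∈ V ∧ y ∈ V) {p : E} (hp : p ∉ V) {u : E}
    (P : G.Walk u u) : asum p P.darts = 2 * π * wnd p P := by
  rw [asum_eq hG hp]; ring

lemma wnd_zero {V D : Set E} (hG : ∀ x y, G.Adj x y → x ∈ V ∧ y ∈ V) (hVD : V ⊆ D)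
    (hD : Convex ℝ D) (hD' : IsClosed D) {p : E} (hp : p ∉ D) {u : E} (P : G.Walk u u) :
    wnd p P = 0 := by
  obtain ⟨φ, hφ⟩ := half_plane hD hD' hp
  have key : ∀ {a b : E} (Q : G.Walk a b), asum p Q.darts = φ b - φ a := by
    intro a b Q
    induction Q with
    | nil => simp [asum]
    | @cons u v w h P ih =>
      have e1 : asum p (SimpleGraph.Walk.cons h P).darts = ang p u v + asum p P.darts := by
        simp [asum]
      rw [e1, ih, hφ _ (hVD (hG _ _ h).1) _ (hVD (hG _ _ h).2)]
      ring
  have h1 := asum_closed hG (fun h => hp (hVD h)) P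
  rw [key, sub_self] at h1
  have hpi : (2:ℝ) * π ≠ 0 := by positivity
  have := (mul_eq_zero.1 h1.symm).resolve_left hpi
  exact_mod_cast this

lemma asum_usc {V : Set E} (hG : ∀ x y, G.Adj x y → x ∈ V ∧ y ∈ V) {p : E} (hp : p ∉ V)
    (L : List G.Dart) : ∀ ε : ℝ, 0 < ε → ∀ᶠ z in 𝓝 p,
      asum z L < asum p L + ε ∧ asum p L - 2 * π * cnt p L - ε < asum z L := by
  induction L with
  | nil => intro ε hε; simp [asum, cnt, hε]
  | cons d L ih =>
    intro ε hε
    have e1 : ∀ z, asum z (d :: L) = ang z d.fst d.snd + asum z L := by intro z; simp [asum]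
    have hx : d.fst ≠ p := fun e => hp (e ▸ (hG _ _ d.adj).1)
    have hy : d.snd ≠ p := fun e => hp (e ▸ (hG _ _ d.adj).2)
    by_cases hm : p ∈ segment ℝ d.fst d.snd
    · have e2 : cnt p (d :: L) = cnt p L + 1 := by simp [cnt, List.countP_cons, hm]
      filter_upwards [ih ε hε] with z hz
      rw [e1, e1, e2, ang_pi hm hx hy]
      have b1 : ang z d.fst d.snd ≤ π := Complex.arg_le_pi _
      have b2 : -π < ang z d.fst d.snd := Complex.neg_pi_lt_arg _
      push_cast
      constructor <;> nlinarith [hz.1, hz.2]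
    · have e2 : cnt p (d :: L) = cnt p L := by simp [cnt, List.countP_cons, hm]
      have hc := ang_contAt hm
      have h3 := Metric.tendsto_nhds.1 hc (ε / 2) (by linarith)
      filter_upwards [ih (ε / 2) (by linarith), h3] with z hz hz3
      rw [Real.dist_eq, abs_lt] at hz3
      rw [e1, e1, e2]
      constructor <;> linarith [hz.1, hz.2, hz3.1, hz3.2]

lemma wnd_usc {V : Set E} (hVf : V.Finite) (hG : ∀ x y, G.Adj x y → x ∈ V ∧ y ∈ V) {p : E}
    (hp : p ∉ V) {u : E} (P : G.Walk u u) :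
    ∀ᶠ z in 𝓝 p, wnd z P ≤ wnd p P ∧ wnd p P - cnt p P.darts ≤ wnd z P := by
  have hpi : (0:ℝ) < π := Real.pi_pos
  filter_upwards [asum_usc hG hp P.darts π hpi, hVf.isClosed.isOpen_compl.mem_nhds hp] with z hz hzV
  rw [asum_closed hG hp, asum_closed hG hzV] at hz
  obtain ⟨h1, h2⟩ := hz
  constructor
  · have : (wnd z P : ℝ) < wnd p P + 1 := by
      by_contra hcon
      push Not at hcon
      nlinarith
    have : wnd z P < wnd p P + 1 := by exact_mod_cast this
    omega
  · have : (wnd p P : ℝ) - cnt p P.darts - 1 < wnd z P := by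
      by_contra hcon
      push Not at hcon
      nlinarith
    have : wnd p P - cnt p P.darts - 1 < wnd z P := by exact_mod_cast this
    omega

/-- Along a preconnected set on which every step is either continuous or constantly traversed,
the winding number is constant. -/
lemma wnd_const {V S : Set E} (hG : ∀ x y, G.Adj x y → x ∈ V ∧ y ∈ V) (hS : IsPreconnected S)
    (hSV : ∀ p ∈ S, p ∉ V) {u : E} (P : G.Walk u u)
    (h : ∀ d ∈ P.darts, ∀ p ∈ S, p ∈ segment ℝ d.fst d.snd → S ⊆ segment ℝ d.fst d.snd)
    {p q : E} (hp : p ∈ S) (hq : q ∈ S) : wnd p P = wnd q P := by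
  have hc : ContinuousOn (fun z => wnd z P) S := by
    intro p hp
    have h1 : Tendsto (fun z => asum z P.darts) (𝓝[S] p) (𝓝 (asum p P.darts)) := by
      unfold asum
      refine tendsto_list_sum P.darts fun d hd => ?_
      by_cases hm : p ∈ segment ℝ d.fst d.snd
      · have hsub := h d hd p hp hm
        have hcst : ∀ z ∈ S, ang z d.fst d.snd = π := by
          intro z hz
          exact ang_pi (hsub hz) (fun e => hSV z hz (e ▸ (hG _ _ d.adj).1))
            (fun e => hSV z hz (e ▸ (hG _ _ d.adj).2))
        rw [hcst p hp]
        refine Tendsto.congr' ?_ tendsto_const_nhds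
        filter_upwards [self_mem_nhdsWithin] with z hz
        rw [hcst z hz]
      · exact (ang_contAt hm).continuousWithinAt
    have h2 := Metric.tendsto_nhds.1 h1 π Real.pi_pos
    refine Tendsto.congr' ?_ (tendsto_const_nhds (x := wnd p P))
    filter_upwards [h2, self_mem_nhdsWithin] with z hz hzS
    rw [Real.dist_eq, asum_closed hG (hSV z hzS), asum_closed hG (hSV p hp), abs_lt] at hz
    have hpi : (0:ℝ) < π := Real.pi_pos
    have a1 : (wnd z P : ℝ) < wnd p P + 1 := by
      by_contra hcon
      push Not at hcon
      nlinarith [hz.2]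
    have a2 : (wnd p P : ℝ) < wnd z P + 1 := by
      by_contra hcon
      push Not at hcon
      nlinarith [hz.1]
    have a1 : wnd z P < wnd p P + 1 := by exact_mod_cast a1
    have a2 : wnd p P < wnd z P + 1 := by exact_mod_cast a2
    omega
  exact hS.constant hc hp hq

end SpProof

namespace SpProof
open Filter Topology Real

variable {G : SimpleGraph E}

/-- Isoperimetric inequality: a closed walk winding `N` times around `c` has at least `3 N` steps. -/
theorem three_wnd_le {V D : Set E} {c : E} (κ : E → E → Set E)
    (hVf : V.Finite) (hVD : V ⊆ D) (hD : Convex ℝ D) (hDc : IsCompact D) (hcV : c ∉ V)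
    (hG : ∀ x y, G.Adj x y → x ∈ V ∧ y ∈ V)
    (hκ1 : ∀ x y, G.Adj x y → segment ℝ x y ⊆ κ x y)
    (hκ2 : ∀ x y, G.Adj x y → Convex ℝ (κ x y) ∧ IsCompact (κ x y) ∧ c ∉ κ x y)
    (hκ3 : ∀ x y, G.Adj x y → (∀ p ∈ κ x y, ∃ᶠ z in 𝓝 p, z ∉ D) ∨
      (∀ p ∈ openSegment ℝ x y, p ∉ V) ∧
        ∀ x' y', G.Adj x' y' → κ x' y' = κ x y → segment ℝ x' y' = κ x y)
    (hκ4 : ∀ x y x' y' p, G.Adj x y → G.Adj x' y' → p ∉ V → p ∈ segment ℝ x y →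
      p ∈ segment ℝ x' y' → κ x y = κ x' y')
    {u : E} (P : G.Walk u u) : 3 * wnd c P ≤ P.length := by
  classical
  rcases le_or_gt (wnd c P) 0 with hN | hN
  · have : (0:ℤ) ≤ P.length := by positivity
    linarith
  set cl : List (Set E) := P.darts.map (fun d => κ d.fst d.snd) with hcl
  let Lv : ℤ → Set E → Prop := fun k S => ∃ p, p ∉ V ∧
    (∃ d ∈ P.darts, κ d.fst d.snd = S ∧ p ∈ segment ℝ d.fst d.snd) ∧
    wnd p P - cnt p P.darts < k ∧ k ≤ wnd p P
  -- counting at a point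
  have hcnt : ∀ p, p ∉ V → ∀ d ∈ P.darts, p ∈ segment ℝ d.fst d.snd →
      cnt p P.darts ≤ cl.count (κ d.fst d.snd) := by
    intro p hp d hd hm
    unfold cnt
    rw [hcl, List.count, List.countP_map]
    apply List.countP_mono_left
    intro e he hpe
    simp only [decide_eq_true_eq] at hpe
    simp only [Function.comp, beq_iff_eq]
    exact hκ4 _ _ _ _ p e.adj d.adj hp hpe hm
  -- every class is used at few levels
  have hupper : ∀ S ∈ cl.toFinset, ((Finset.Icc 1 (wnd c P)).filter (fun k => Lv k S)).card ≤ cl.count S := by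
    intro S hS
    rw [List.mem_toFinset, hcl, List.mem_map] at hS
    obtain ⟨d, hd, rfl⟩ := hS
    rcases hκ3 _ _ d.adj with hside | ⟨hop, hin⟩
    · have : (Finset.Icc 1 (wnd c P)).filter (fun k => Lv k (κ d.fst d.snd)) ⊆
          Finset.Icc 1 (cl.count (κ d.fst d.snd) : ℤ) := by
        intro k hk
        rw [Finset.mem_filter, Finset.mem_Icc] at hk
        obtain ⟨hk1, p, hp, ⟨e, he, hee, hpe⟩, hl1, hl2⟩ := hk
        rw [Finset.mem_Icc]
        refine ⟨hk1.1, ?_⟩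
        have hfr := hside p (hee ▸ hκ1 _ _ e.adj hpe)
        obtain ⟨z, hz, hz1, hz2⟩ := (hfr.and_eventually (wnd_usc hVf hG hp P)).exists
        rw [wnd_zero hG hVD hD hDc.isClosed hz] at hz1 hz2
        have := hcnt p hp e he hpe
        rw [hee] at this
        have : (cnt p P.darts : ℤ) ≤ cl.count (κ d.fst d.snd) := by exact_mod_cast this
        linarith
      refine (Finset.card_le_card this).trans ?_
      simp
    · have hseg : segment ℝ d.fst d.snd = κ d.fst d.snd := hin _ _ d.adj rfl
      have hopen : ∀ p, p ∉ V → p ∈ segment ℝ d.fst d.snd → p ∈ openSegment ℝ d.fst d.snd := by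
        intro p hp hm
        exact mem_openSegment_of_ne_left_right (fun e => hp (e ▸ (hG _ _ d.adj).1))
          (fun e => hp (e ▸ (hG _ _ d.adj).2)) hm
      have hconst : ∀ p q, p ∈ openSegment ℝ d.fst d.snd → q ∈ openSegment ℝ d.fst d.snd →
          wnd p P = wnd q P := by
        intro p q hp hq
        refine wnd_const hG (convex_openSegment _ _).isPreconnected hop P ?_ hp hq
        intro e he p hp hpe
        have h1 := hκ4 _ _ _ _ p e.adj d.adj (hop p hp) hpe (openSegment_subset_segment _ _ _ hp)
        rw [hin _ _ e.adj h1, ← hseg]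
        exact openSegment_subset_segment _ _ _
      by_cases hne : ∃ k0, Lv k0 (κ d.fst d.snd)
      · obtain ⟨k0, p0, hp0, ⟨e0, he0, hee0, hpe0⟩, -⟩ := hne
        rw [hin _ _ e0.adj hee0, ← hseg] at hpe0
        have : (Finset.Icc 1 (wnd c P)).filter (fun k => Lv k (κ d.fst d.snd)) ⊆
          Finset.Ioc (wnd p0 P - cl.count (κ d.fst d.snd)) (wnd p0 P) := by
          intro k hk
          rw [Finset.mem_filter, Finset.mem_Icc] at hk
          obtain ⟨hk1, p, hp, ⟨e, he, hee, hpe⟩, hl1, hl2⟩ := hk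
          rw [Finset.mem_Ioc]
          have hc := hcnt p hp e he hpe
          rw [hee] at hc
          rw [hin _ _ e.adj hee, ← hseg] at hpe
          have h1 := hconst p p0 (hopen p hp hpe) (hopen p0 hp0 hpe0)
          have hc : (cnt p P.darts : ℤ) ≤ cl.count (κ d.fst d.snd) := by exact_mod_cast hc
          constructor <;> linarith
        refine (Finset.card_le_card this).trans ?_
        simp
      · push Not at hne
        rw [Finset.filter_false_of_mem (fun k _ => hne k)]
        simp
  -- every level is blocked by at least three classes
  have hlower : ∀ k ∈ Finset.Icc 1 (wnd c P), 3 ≤ (cl.toFinset.filter (fun S => Lv k S)).card := by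
    intro k hk
    rw [Finset.mem_Icc] at hk
    by_contra hlt
    push Not at hlt
    set B := cl.toFinset.filter (fun S => Lv k S) with hB
    have hgood : ∀ S ∈ B, Convex ℝ S ∧ IsCompact S ∧ c ∉ S := by
      intro S hS
      rw [hB, Finset.mem_filter, List.mem_toFinset, hcl, List.mem_map] at hS
      obtain ⟨⟨d, hd, rfl⟩, -⟩ := hS
      exact hκ2 _ _ d.adj
    have hray : ∃ u : E, u ≠ 0 ∧ ∀ t : ℝ, 0 ≤ t → (∀ S ∈ B, c + t • u ∉ S) ∧ c + t • u ∉ V := by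
      have : B.card = 0 ∨ B.card = 1 ∨ B.card = 2 := by omega
      rcases this with h | h | h
      · rw [Finset.card_eq_zero] at h
        obtain ⟨u, hu, hu2⟩ := free_ray (S₁ := ∅) (S₂ := ∅) (c := c) convex_empty isCompact_empty (by simp)
          convex_empty isCompact_empty (by simp) hVf hcV
        exact ⟨u, hu, fun t ht => ⟨by simp [h], (hu2 t ht).2.2⟩⟩
      · obtain ⟨S, hS⟩ := Finset.card_eq_one.1 h
        have g := hgood S (by simp [hS])
        obtain ⟨u, hu, hu2⟩ := free_ray g.1 g.2.1 g.2.2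
          convex_empty isCompact_empty (by simp) hVf hcV
        exact ⟨u, hu, fun t ht => ⟨by simpa [hS] using (hu2 t ht).1, (hu2 t ht).2.2⟩⟩
      · obtain ⟨S, S', -, hS⟩ := Finset.card_eq_two.1 h
        have g := hgood S (by simp [hS])
        have g' := hgood S' (by simp [hS])
        obtain ⟨u, hu, hu2⟩ := free_ray g.1 g.2.1 g.2.2 g'.1 g'.2.1 g'.2.2 hVf hcV
        exact ⟨u, hu, fun t ht => ⟨by simpa [hS] using ⟨(hu2 t ht).1, (hu2 t ht).2.1⟩, (hu2 t ht).2.2⟩⟩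
    obtain ⟨w, hw, hfree⟩ := hray
    have hloc : ContinuousOn (fun t : ℝ => decide (k ≤ wnd (c + t • w) P)) (Set.Ici 0) := by
      intro t ht
      obtain ⟨hf1, hf2⟩ := hfree t ht
      have husc := wnd_usc hVf hG hf2 P
      have hct : Tendsto (fun t : ℝ => c + t • w) (𝓝[Set.Ici 0] t) (𝓝 (c + t • w)) := by
        apply ContinuousAt.continuousWithinAt
        fun_prop
      have hev := hct.eventually husc
      refine Tendsto.congr' ?_ (tendsto_const_nhds (x := decide (k ≤ wnd (c + t • w) P)))
      filter_upwards [hev] with s hs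
      by_cases hkk : k ≤ wnd (c + t • w) P
      · have : k ≤ wnd (c + t • w) P - cnt (c + t • w) P.darts := by
          by_contra hcon
          push Not at hcon
          have hpos : 0 < cnt (c + t • w) P.darts := by
            have : (0:ℤ) < cnt (c + t • w) P.darts := by linarith
            exact_mod_cast this
          unfold cnt at hpos
          rw [List.countP_pos_iff] at hpos
          obtain ⟨d, hd, hpd⟩ := hpos
          simp only [decide_eq_true_eq] at hpd
          refine hf1 (κ d.fst d.snd) ?_ (hκ1 _ _ d.adj hpd)
          rw [hB, Finset.mem_filter, List.mem_toFinset, hcl, List.mem_map]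
          exact ⟨⟨d, hd, rfl⟩, _, hf2, ⟨d, hd, rfl, hpd⟩, hcon, hkk⟩
        have h2 : k ≤ wnd (c + s • w) P := by linarith [hs.2]
        simp [hkk, h2]
      · have h2 : ¬ k ≤ wnd (c + s • w) P := by
          have := hs.1
          omega
        simp [hkk, h2]
    -- far away
    obtain ⟨R, hR⟩ := hDc.isBounded.exists_norm_le
    have hwn : 0 < ‖w‖ := norm_pos_iff.2 hw
    let t1 : ℝ := (|R| + ‖c‖ + 1) / ‖w‖
    have ht1 : 0 ≤ t1 := by positivity
    have hout : c + t1 • w ∉ D := by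
      intro hin
      have h1 := hR _ hin
      have h2 : ‖t1 • w‖ = |R| + ‖c‖ + 1 := by
        rw [norm_smul, Real.norm_of_nonneg ht1]
        simp only [t1]
        field_simp
      have h3 : ‖t1 • w‖ ≤ ‖c + t1 • w‖ + ‖c‖ := by
        have := norm_sub_le (c + t1 • w) c
        simpa using this
      linarith [le_abs_self R]
    have hcst := (convex_Ici (0:ℝ)).isPreconnected.constant hloc (Set.self_mem_Ici) (show t1 ∈ Set.Ici (0:ℝ) from ht1)
    simp only [zero_smul, add_zero] at hcst
    rw [wnd_zero hG hVD hD hDc.isClosed hout] at hcst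
    rw [decide_eq_decide] at hcst
    have := hcst.1 hk.2
    omega
  -- double counting
  have hdc := Finset.sum_card_bipartiteAbove_eq_sum_card_bipartiteBelow
    (s := Finset.Icc 1 (wnd c P)) (t := cl.toFinset) Lv
  simp only [Finset.bipartiteAbove, Finset.bipartiteBelow] at hdc
  have h1 : ∑ k ∈ Finset.Icc 1 (wnd c P), 3 ≤ ∑ k ∈ Finset.Icc 1 (wnd c P),
      (cl.toFinset.filter (fun S => Lv k S)).card := Finset.sum_le_sum hlower
  have h2 := Finset.sum_le_sum hupper
  have h3 : ∑ S ∈ cl.toFinset, cl.count S = P.length := by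
    have : ∑ S ∈ cl.toFinset, cl.count S = cl.length :=
      List.sum_toFinset_count_eq_length cl
    rw [this, hcl]
    simp
  rw [hdc] at h1
  have h4 := h1.trans h2
  rw [h3] at h4
  simp at h4
  omega

end SpProof

namespace SpProof
open Filter Topology Real

lemma exists_potential {G : SimpleGraph E} {c : E}
    (H : ∀ (u : E) (P : G.Walk u u), 3 * wnd c P ≤ P.length) :
    ∃ h : E → ℤ, ∀ x y, G.Adj x y → h y ≤ h x + 1 - 3 * mm c x y := by
  classical
  let root : E → E := fun x => (G.connectedComponentMk x).out
  have hroot : ∀ x, G.Reachable (root x) x := by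
    intro x
    rw [← SimpleGraph.ConnectedComponent.eq]
    exact Quot.out_eq _
  have hroot2 : ∀ x y, G.Adj x y → root x = root y := by
    intro x y hxy
    have : G.connectedComponentMk x = G.connectedComponentMk y :=
      SimpleGraph.ConnectedComponent.eq.2 hxy.reachable
    simp only [root, this]
  let wt : ∀ {a b : E}, G.Walk a b → ℤ := fun P => P.length - 3 * wnd c P
  have wt_app : ∀ {a b d : E} (P : G.Walk a b) (Q : G.Walk b d), wt (P.append Q) = wt P + wt Q := by
    intro a b d P Q
    simp only [wt, wnd, SimpleGraph.Walk.length_append, SimpleGraph.Walk.darts_append,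
      List.map_append, List.sum_append]
    push_cast
    ring
  let A : E → Set ℤ := fun x => {n | ∃ P : G.Walk (root x) x, wt P = n}
  have hA : ∀ x, (A x).Nonempty := fun x => by
    obtain ⟨P⟩ := hroot x
    exact ⟨_, P, rfl⟩
  have hB : ∀ x, BddBelow (A x) := fun x => by
    obtain ⟨Q⟩ := (hroot x).symm
    refine ⟨- wt Q, ?_⟩
    rintro n ⟨P, rfl⟩
    have := H _ (P.append Q)
    have h2 := wt_app P Q
    have h3 : 0 ≤ wt (P.append Q) := by simp only [wt]; linarith
    linarith
  refine ⟨fun x => sInf (A x), fun x y hxy => ?_⟩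
  obtain ⟨P, hP⟩ := Int.csInf_mem (hA x) (hB x)
  refine csInf_le (hB y) ?_
  have hr := hroot2 x y hxy
  have : ∃ Q : G.Walk (root x) y, wt Q = sInf (A x) + 1 - 3 * mm c x y := by
    refine ⟨P.append (SimpleGraph.Walk.cons hxy SimpleGraph.Walk.nil), ?_⟩
    rw [wt_app, hP]
    simp [wt, wnd]
    ring
  rw [hr] at this
  exact this

lemma cross_ne {a b d : E} (h : AffineIndependent ℝ ![a, b, d]) :
    cross (F b - F a) (F d - F a) ≠ 0 := by
  intro h0
  rw [affineIndependent_iff_not_collinear_set] at h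
  apply h
  simp only [cross, F, Complex.sub_re, Complex.sub_im] at h0
  rw [collinear_iff_of_mem (p₀ := a) (by simp)]
  by_cases hu : b = a
  · refine ⟨d - a, ?_⟩
    intro p hp
    simp only [Set.mem_insert_iff, Set.mem_singleton_iff] at hp
    rcases hp with rfl | rfl | rfl
    · exact ⟨0, by simp⟩
    · exact ⟨0, by simp [hu]⟩
    · exact ⟨1, by simp⟩
  · refine ⟨b - a, ?_⟩
    have hn : (b 0 - a 0) ^ 2 + (b 1 - a 1) ^ 2 ≠ 0 := by
      intro hz
      apply hu
      ext i
      fin_cases i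
      · simp; nlinarith [sq_nonneg (b 0 - a 0), sq_nonneg (b 1 - a 1)]
      · simp; nlinarith [sq_nonneg (b 0 - a 0), sq_nonneg (b 1 - a 1)]
    intro p hp
    simp only [Set.mem_insert_iff, Set.mem_singleton_iff] at hp
    rcases hp with rfl | rfl | rfl
    · exact ⟨0, by simp⟩
    · exact ⟨1, by simp⟩
    · refine ⟨((b 0 - a 0) * (p 0 - a 0) + (b 1 - a 1) * (p 1 - a 1)) / ((b 0 - a 0) ^ 2 + (b 1 - a 1) ^ 2), ?_⟩
      ext i
      fin_cases i
      · simp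
        field_simp
        linear_combination (-(b 1 - a 1)) * h0
      · simp
        field_simp
        linear_combination (b 0 - a 0) * h0

lemma centroid_not_seg {a b d c : E} (hcr : cross (F b - F a) (F d - F a) ≠ 0)
    (hc : c = (1/3:ℝ) • a + (1/3:ℝ) • b + (1/3:ℝ) • d) : c ∉ segment ℝ b d := by
  rintro ⟨s, t, hs, ht, hst, h⟩
  apply hcr
  rw [hc] at h
  have h0 := congrArg (fun v : E => v 0) h
  have h1 := congrArg (fun v : E => v 1) h
  simp at h0 h1
  simp only [cross, F, Complex.sub_re, Complex.sub_im]
  have : s = 1 - t := by linarith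
  subst this
  linear_combination (-(3 * (b 1 - d 1))) * h0 + (3 * (b 0 - d 0)) * h1

lemma card_three_cases {α : Type*} {a b d : α} {s : Set α} (hs : s ⊆ {a, b, d}) (h : a ∉ s) : s ⊆ {b, d} := by
  intro x hx
  rcases hs hx with rfl | h' | h'
  · exact absurd hx h
  · simp [h']
  · right; exact h'

lemma mem_hull3 {a b d : E} {S : Set E} (hS : Convex ℝ S) (ha : a ∈ S) (hb : b ∈ S) (hd : d ∈ S) :
    (1/3:ℝ) • a + (1/3:ℝ) • b + (1/3:ℝ) • d ∈ S := by
  have h1 : (1/2:ℝ) • a + (1/2:ℝ) • b ∈ S := hS ha hb (by norm_num) (by norm_num) (by norm_num)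
  have h2 : (2/3:ℝ) • ((1/2:ℝ) • a + (1/2:ℝ) • b) + (1/3:ℝ) • d ∈ S :=
    hS h1 hd (by norm_num) (by norm_num) (by norm_num)
  convert h2 using 1
  module

lemma cross_rot (a b d : E) : cross (F d - F b) (F a - F b) = cross (F b - F a) (F d - F a) := by
  simp only [cross, Complex.sub_re, Complex.sub_im]
  ring

lemma face_of_centroid {K : Geometry.SimplicialComplex ℝ E} {a b d c : E} {σ s : Finset E}
    (hσ : σ ∈ K.faces) (hσe : (σ : Set E) = {a, b, d}) (hs : s ∈ K.faces)
    (hcr : cross (F b - F a) (F d - F a) ≠ 0)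
    (hc : c = (1/3:ℝ) • a + (1/3:ℝ) • b + (1/3:ℝ) • d)
    (hcs : c ∈ convexHull ℝ (s : Set E)) : σ ⊆ s := by
  have key : ∀ a b d : E, (σ : Set E) = {a, b, d} → cross (F b - F a) (F d - F a) ≠ 0 →
      c = (1/3:ℝ) • a + (1/3:ℝ) • b + (1/3:ℝ) • d → a ∈ (s : Set E) := by
    intro a b d hσe hcr hc
    by_contra has
    have hcσ : c ∈ convexHull ℝ (σ : Set E) := by
      rw [hσe, hc]
      exact mem_hull3 (convex_convexHull ℝ _) (subset_convexHull ℝ _ (by simp))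
        (subset_convexHull ℝ _ (by simp)) (subset_convexHull ℝ _ (by simp))
    have h1 := K.inter_subset_convexHull hσ hs ⟨hcσ, hcs⟩
    have h2 : (σ : Set E) ∩ (s : Set E) ⊆ {b, d} :=
      card_three_cases (a := a) (fun x hx => hσe ▸ hx.1) (fun h => has h.2)
    have h3 := convexHull_mono (𝕜 := ℝ) h2 h1
    rw [convexHull_pair] at h3
    exact centroid_not_seg hcr hc h3
  have h1 := key a b d hσe hcr hc
  have h2 := key b d a (by rw [hσe]; ext; simp; tauto) (by rw [cross_rot]; exact hcr)
    (by rw [hc]; module)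
  have h3 := key d a b (by rw [hσe]; ext; simp; tauto) (by rw [← cross_rot]; exact hcr)
    (by rw [hc]; module)
  intro x hx
  have : x ∈ (σ : Set E) := hx
  rw [hσe] at this
  rcases this with rfl | rfl | rfl
  · exact h1
  · exact h2
  · exact h3

end SpProof

namespace SpProof
open Filter Topology Real

structure Setup (K : Geometry.SimplicialComplex ℝ E) (v : Fin 3 → E)
    (β : Fin 3 → E →ᵃ[ℝ] ℝ) (c : E) : Prop where
  mem_iff : ∀ x, x ∈ convexHull ℝ (Set.range v) ↔ ∀ i, 0 ≤ β i x
  self : ∀ i, β i (v i) = 1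
  ne : ∀ i j, i ≠ j → β i (v j) = 0
  ext : ∀ x y, (∀ i, β i x = β i y) → x = y
  sum : ∀ x, β 0 x + β 1 x + β 2 x = 1
  fin : K.faces.Finite
  sub : K.vertices ⊆ convexHull ℝ (Set.range v)
  cpos : ∀ i, 0 < β i c
  face : ∀ s ∈ K.faces, s.card ≤ 2 → c ∉ convexHull ℝ (s : Set E)

variable {K : Geometry.SimplicialComplex ℝ E} {v : Fin 3 → E}
    {β : Fin 3 → E →ᵃ[ℝ] ℝ} {c : E}

def VV (K : Geometry.SimplicialComplex ℝ E) (v : Fin 3 → E) : Set E := K.vertices ∪ Set.range v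

def Sd (v : Fin 3 → E) (β : Fin 3 → E →ᵃ[ℝ] ℝ) (i : Fin 3) : Set E :=
  {z | z ∈ convexHull ℝ (Set.range v) ∧ β i z = 0}

def gr (K : Geometry.SimplicialComplex ℝ E) (v : Fin 3 → E) (β : Fin 3 → E →ᵃ[ℝ] ℝ) :
    SimpleGraph E where
  Adj x y := x ≠ y ∧ ((({x, y} : Set E) ∈ (fun s : Finset E => (s : Set E)) '' K.faces) ∨
    ∃ i, x ∈ VV K v ∧ y ∈ VV K v ∧ β i x = 0 ∧ β i y = 0)
  symm := ⟨by
    rintro x y ⟨h, h'⟩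
    refine ⟨h.symm, ?_⟩
    rcases h' with h' | ⟨i, h1, h2, h3, h4⟩
    · left; rwa [Set.pair_comm]
    · exact Or.inr ⟨i, h2, h1, h4, h3⟩⟩
  loopless := ⟨fun x h => h.1 rfl⟩

open Classical in
noncomputable def kap (v : Fin 3 → E) (β : Fin 3 → E →ᵃ[ℝ] ℝ) (x y : E) : Set E :=
  if h : ∃ i, β i x = 0 ∧ β i y = 0 then Sd v β h.choose else segment ℝ x y

lemma Setup.side_unique (S : Setup K v β c) {x y : E} {i j : Fin 3} (hxy : x ≠ y)
    (h1 : β i x = 0) (h2 : β i y = 0) (h3 : β j x = 0) (h4 : β j y = 0) : i = j := by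
  by_contra hij
  apply hxy
  apply S.ext
  have hx := S.sum x
  have hy := S.sum y
  intro k
  fin_cases i <;> fin_cases j <;> fin_cases k <;> simp at * <;> linarith

lemma Setup.corner_of (S : Setup K v β c) {x : E} {j : Fin 3} (h : ∀ i, i ≠ j → β i x = 0) :
    x = v j := by
  apply S.ext
  have hx := S.sum x
  have h1 := S.ne
  have h2 := S.self j
  intro k
  by_cases hk : k = j
  · subst hk
    rw [h2]
    have := h (k + 1) (by fin_cases k <;> decide)
    have := h (k + 2) (by fin_cases k <;> decide)
    fin_cases k <;> simp at * <;> simp_all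
  · rw [h k hk, h1 k j hk]

lemma kap_side (S : Setup K v β c) {x y : E} (hxy : x ≠ y) {i : Fin 3} (h1 : β i x = 0)
    (h2 : β i y = 0) : kap v β x y = Sd v β i := by
  have h : ∃ i, β i x = 0 ∧ β i y = 0 := ⟨i, h1, h2⟩
  unfold kap
  rw [dif_pos h]
  rw [S.side_unique hxy h.choose_spec.1 h.choose_spec.2 h1 h2]

lemma kap_seg {x y : E} (h : ¬ ∃ i, β i x = 0 ∧ β i y = 0) : kap v β x y = segment ℝ x y := by
  unfold kap
  rw [dif_neg h]

lemma seg_zero {x y p : E} (f : E →ᵃ[ℝ] ℝ) (hx : 0 ≤ f x) (hy : 0 ≤ f y)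
    (hp : p ∈ segment ℝ x y) (hpx : p ≠ x) (hpy : p ≠ y) (h0 : f p = 0) : f x = 0 ∧ f y = 0 := by
  obtain ⟨s, t, hs, ht, hst, rfl⟩ := hp
  rw [Convex.combo_affine_apply hst] at h0
  simp only [smul_eq_mul] at h0
  have hs' : 0 < s := by
    rcases hs.lt_or_eq with h | h
    · exact h
    · exfalso; apply hpy
      have : t = 1 := by linarith
      simp [← h, this]
  have ht' : 0 < t := by
    rcases ht.lt_or_eq with h | h
    · exact h
    · exfalso; apply hpx
      have : s = 1 := by linarith
      simp [← h, this]
  have := mul_nonneg hs'.le hx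
  have := mul_nonneg ht'.le hy
  constructor
  · have : s * f x = 0 := by linarith
    rcases mul_eq_zero.1 this with h | h
    · linarith
    · exact h
  · have : t * f y = 0 := by linarith
    rcases mul_eq_zero.1 this with h | h
    · linarith
    · exact h

lemma sd_props (S : Setup K v β c) (i : Fin 3) :
    Convex ℝ (Sd v β i) ∧ IsCompact (Sd v β i) ∧ c ∉ Sd v β i := by
  refine ⟨?_, ?_, fun h => (S.cpos i).ne' h.2⟩
  · intro x hx y hy s t hs ht hst
    refine ⟨convex_convexHull ℝ _ hx.1 hy.1 hs ht hst, ?_⟩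
    rw [Convex.combo_affine_apply hst, hx.2, hy.2]
    simp
  · have h1 : IsCompact (convexHull ℝ (Set.range v)) := (Set.finite_range v).isCompact_convexHull (𝕜 := ℝ)
    have h2 : IsClosed {z | β i z = 0} :=
      isClosed_eq (β i).continuous_of_finiteDimensional continuous_const
    exact h1.inter_right h2

lemma sd_freq (S : Setup K v β c) (i : Fin 3) {p : E} (hp : p ∈ Sd v β i) :
    ∃ᶠ z in 𝓝 p, z ∉ convexHull ℝ (Set.range v) := by
  have h1 : Tendsto (fun s : ℝ => AffineMap.lineMap p c (-s)) (𝓝[>] (0:ℝ)) (𝓝 p) := by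
    have h : Continuous (fun s : ℝ => AffineMap.lineMap p c (-s) : ℝ → E) := by
      fun_prop
    have := h.tendsto 0
    simp only [neg_zero, AffineMap.lineMap_apply_zero] at this
    exact this.mono_left nhdsWithin_le_nhds
  refine h1.frequently (Eventually.frequently ?_)
  filter_upwards [self_mem_nhdsWithin] with s hs
  rw [S.mem_iff]
  push Not
  refine ⟨i, ?_⟩
  rw [AffineMap.apply_lineMap, hp.2]
  simp only [AffineMap.lineMap_apply, vsub_eq_sub, sub_zero, vadd_eq_add, add_zero, smul_eq_mul]
  have := mul_pos (show (0:ℝ) < s from hs) (S.cpos i)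
  linarith

lemma Setup.vsub (S : Setup K v β c) : VV K v ⊆ convexHull ℝ (Set.range v) := by
  rintro x (hx | hx)
  · exact S.sub hx
  · exact subset_convexHull ℝ _ hx

lemma Setup.vfin (S : Setup K v β c) : (VV K v).Finite := by
  refine Set.Finite.union ?_ (Set.finite_range v)
  have : K.vertices = (fun x : E => ({x} : Finset E)) ⁻¹' K.faces := rfl
  rw [this]
  exact S.fin.preimage (Finset.singleton_injective.injOn)

lemma Setup.cV (S : Setup K v β c) : c ∉ VV K v := by
  rintro (h | ⟨j, rfl⟩)
  · have := S.face {c} h (by simp)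
    apply this
    simp
  · have := S.cpos (j + 1)
    rw [S.ne _ _ (by fin_cases j <;> decide)] at this
    exact lt_irrefl _ this

lemma Setup.adjV (S : Setup K v β c) {x y : E} (h : (gr K v β).Adj x y) :
    x ∈ VV K v ∧ y ∈ VV K v := by
  rcases h with ⟨hne, ⟨s, hs, hse⟩ | ⟨i, h1, h2, -⟩⟩
  · simp only at hse
    have hx : x ∈ s := by
      have : x ∈ (s : Set E) := by rw [hse]; simp
      exact this
    have hy : y ∈ s := by
      have : y ∈ (s : Set E) := by rw [hse]; simp
      exact this
    exact ⟨Or.inl (K.down_closed hs (by simpa using hx) (by simp)),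
      Or.inl (K.down_closed hs (by simpa using hy) (by simp))⟩
  · exact ⟨h1, h2⟩

/-- an edge not on a side is a face -/
lemma adj_face {x y : E} (h : (gr K v β).Adj x y) (hn : ¬ ∃ i, β i x = 0 ∧ β i y = 0) :
    ∃ s ∈ K.faces, (s : Set E) = {x, y} := by
  rcases h with ⟨hne, ⟨s, hs, hse⟩ | ⟨i, -, -, h1, h2⟩⟩
  · exact ⟨s, hs, hse⟩
  · exact absurd ⟨i, h1, h2⟩ hn

lemma card_pair {s : Finset E} {x y : E} (h : (s : Set E) = {x, y}) : s.card ≤ 2 := by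
  classical
  have : s = {x, y} := by
    apply Finset.coe_injective
    rw [h]; simp
  rw [this]
  exact Finset.card_le_two

lemma Setup.main (S : Setup K v β c) :
    ∃ h : E → ℤ, ∀ x y, (gr K v β).Adj x y → |h y - h x + 3 * mm c x y| ≤ 1 := by
  have hseg : ∀ x y, (gr K v β).Adj x y → segment ℝ x y ⊆ kap v β x y := by
    intro x y hxy
    by_cases hs : ∃ i, β i x = 0 ∧ β i y = 0
    · obtain ⟨i, h1, h2⟩ := hs
      rw [kap_side S hxy.1 h1 h2]
      exact (sd_props S i).1.segment_subset ⟨S.vsub (S.adjV hxy).1, h1⟩ ⟨S.vsub (S.adjV hxy).2, h2⟩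
    · rw [kap_seg hs]
  have hk2 : ∀ x y, (gr K v β).Adj x y →
      Convex ℝ (kap v β x y) ∧ IsCompact (kap v β x y) ∧ c ∉ kap v β x y := by
    intro x y hxy
    by_cases hs : ∃ i, β i x = 0 ∧ β i y = 0
    · obtain ⟨i, h1, h2⟩ := hs
      rw [kap_side S hxy.1 h1 h2]
      exact sd_props S i
    · rw [kap_seg hs]
      obtain ⟨s, hs, hse⟩ := adj_face hxy hs
      refine ⟨convex_segment x y, ?_, ?_⟩
      · rw [← convexHull_pair]
        exact (Set.toFinite _).isCompact_convexHull (𝕜 := ℝ)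
      · rw [← convexHull_pair, ← hse]
        exact S.face s hs (card_pair hse)
  have hk3 : ∀ x y, (gr K v β).Adj x y →
      (∀ p ∈ kap v β x y, ∃ᶠ z in 𝓝 p, z ∉ convexHull ℝ (Set.range v)) ∨
      (∀ p ∈ openSegment ℝ x y, p ∉ VV K v) ∧
        ∀ x' y', (gr K v β).Adj x' y' → kap v β x' y' = kap v β x y →
          segment ℝ x' y' = kap v β x y := by
    intro x y hxy
    by_cases hs : ∃ i, β i x = 0 ∧ β i y = 0
    · left
      obtain ⟨i, h1, h2⟩ := hs
      rw [kap_side S hxy.1 h1 h2]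
      exact fun p hp => sd_freq S i hp
    · right
      have hxV := S.adjV hxy
      have hx := (S.mem_iff x).1 (S.vsub hxV.1)
      have hy := (S.mem_iff y).1 (S.vsub hxV.2)
      constructor
      · intro p hp hpV
        have hpseg := openSegment_subset_segment ℝ x y hp
        have hpx : p ≠ x := by
          rintro rfl
          exact hxy.1 (left_mem_openSegment_iff.1 hp)
        have hpy : p ≠ y := by
          rintro rfl
          exact hxy.1 (right_mem_openSegment_iff.1 hp)
        rcases hpV with hpK | ⟨j, rfl⟩
        · obtain ⟨s, hsf, hse⟩ := adj_face hxy hs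
          have h1 := K.inter_subset_convexHull hsf (show ({p} : Finset E) ∈ K.faces from hpK)
            ⟨by rw [hse, convexHull_pair]; exact hpseg, by simp⟩
          have h2 : (s : Set E) ∩ ((({p} : Finset E)) : Set E) = ∅ := by
            rw [hse]
            ext z
            simp only [Finset.coe_singleton, Set.mem_inter_iff, Set.mem_insert_iff,
              Set.mem_singleton_iff, Set.mem_empty_iff_false, iff_false]
            rintro ⟨rfl | rfl, h⟩
            · exact hpx h.symm
            · exact hpy h.symm
          rw [h2] at h1
          simp at h1
        · apply hs
          refine ⟨j + 1, seg_zero (β (j+1)) (hx _) (hy _) hpseg hpx hpy ?_⟩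
          exact S.ne _ _ (by fin_cases j <;> decide)
      · intro x' y' hxy' he
        by_cases hs' : ∃ i, β i x' = 0 ∧ β i y' = 0
        · exfalso
          obtain ⟨i, h1, h2⟩ := hs'
          rw [kap_side S hxy'.1 h1 h2, kap_seg hs] at he
          apply hs
          refine ⟨i, ?_, ?_⟩
          · exact (he ▸ left_mem_segment ℝ x y : x ∈ Sd v β i).2
          · exact (he ▸ right_mem_segment ℝ x y : y ∈ Sd v β i).2
        · rw [← he, kap_seg hs']
  have hk4a : ∀ x y x' y' p, (gr K v β).Adj x y → (gr K v β).Adj x' y' → p ∉ VV K v →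
      p ∈ segment ℝ x y → p ∈ segment ℝ x' y' → (∃ i, β i x = 0 ∧ β i y = 0) →
      kap v β x y = kap v β x' y' := by
    rintro x y x' y' p h h' hp hps hps' ⟨i, h1, h2⟩
    have hp0 : β i p = 0 := by
      have := hseg _ _ h hps
      rw [kap_side S h.1 h1 h2] at this
      exact this.2
    have hV := S.adjV h'
    have h3 := seg_zero (β i) ((S.mem_iff x').1 (S.vsub hV.1) i)
      ((S.mem_iff y').1 (S.vsub hV.2) i) hps'
      (fun e => hp (e ▸ hV.1)) (fun e => hp (e ▸ hV.2)) hp0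
    rw [kap_side S h.1 h1 h2, kap_side S h'.1 h3.1 h3.2]
  have hk4 : ∀ x y x' y' p, (gr K v β).Adj x y → (gr K v β).Adj x' y' → p ∉ VV K v →
      p ∈ segment ℝ x y → p ∈ segment ℝ x' y' → kap v β x y = kap v β x' y' := by
    intro x y x' y' p h h' hp hps hps'
    by_cases hs : ∃ i, β i x = 0 ∧ β i y = 0
    · exact hk4a _ _ _ _ p h h' hp hps hps' hs
    by_cases hs' : ∃ i, β i x' = 0 ∧ β i y' = 0
    · exact (hk4a _ _ _ _ p h' h hp hps' hps hs').symm
    obtain ⟨s, hsf, hse⟩ := adj_face h hs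
    obtain ⟨s', hsf', hse'⟩ := adj_face h' hs'
    rw [kap_seg hs, kap_seg hs']
    have h1 := K.inter_subset_convexHull hsf hsf'
      ⟨by rw [hse, convexHull_pair]; exact hps, by rw [hse', convexHull_pair]; exact hps'⟩
    have hV := S.adjV h
    have key : ∀ z, z ∈ VV K v → ¬ (s : Set E) ∩ (s' : Set E) ⊆ {z} := by
      intro z hz hsub
      have := convexHull_mono (𝕜 := ℝ) hsub h1
      rw [convexHull_singleton] at this
      exact hp (this ▸ hz)
    have hx : x ∈ (s' : Set E) := by
      by_contra hx
      apply key y hV.2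
      rintro z ⟨hz, hz'⟩
      rw [hse] at hz
      rcases hz with rfl | rfl
      · exact absurd hz' hx
      · rfl
    have hy : y ∈ (s' : Set E) := by
      by_contra hy
      apply key x hV.1
      rintro z ⟨hz, hz'⟩
      rw [hse] at hz
      rcases hz with rfl | rfl
      · rfl
      · exact absurd hz' hy
    rw [hse'] at hx hy
    rcases hx with rfl | rfl <;> rcases hy with rfl | rfl
    · exact absurd rfl h.1
    · rfl
    · exact segment_symm ℝ _ _
    · exact absurd rfl h.1
  obtain ⟨h, hh⟩ := exists_potential (G := gr K v β) (c := c) (fun u P =>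
    three_wnd_le (kap v β) S.vfin S.vsub (convex_convexHull ℝ _)
      ((Set.finite_range v).isCompact_convexHull (𝕜 := ℝ)) S.cV (fun x y h => S.adjV h) hseg hk2 hk3 hk4 P)
  refine ⟨h, fun x y hxy => ?_⟩
  have h1 := hh x y hxy
  have h2 := hh y x hxy.symm
  rw [mm_anti (fun hc => (hk2 x y hxy).2.2 (hseg x y hxy hc))] at h2
  rw [abs_le]
  constructor <;> linarith

end SpProof

namespace SpProof
open Filter Topology Real

def lab (z : ℤ) : Fin 3 := ⟨(z % 3).toNat, by omega⟩

lemma lab_eq {z w : ℤ} : lab z = lab w ↔ z % 3 = w % 3 := by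
  simp only [lab, Fin.mk.injEq]
  omega

lemma lab_iff {z : ℤ} {i : Fin 3} : lab z = i ↔ z % 3 = (i : ℕ) := by
  simp only [lab, Fin.ext_iff]
  omega

lemma Setup.final (S : Setup K v β c)
    (hcv : cross (F (v 1) - F (v 0)) (F (v 2) - F (v 0)) ≠ 0)
    (hcc : c = β 0 c • v 0 + β 1 c • v 1 + β 2 c • v 2) {a b d : E} {σ : Finset E}
    (hσ : σ ∈ K.faces) (hσe : (σ : Set E) = {a, b, d})
    (hσ3 : σ.card = 3) (hab : a ≠ b) (had : a ≠ d) (hbd : b ≠ d)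
    (hcr : cross (F b - F a) (F d - F a) ≠ 0)
    (hc : c = (1/3:ℝ) • a + (1/3:ℝ) • b + (1/3:ℝ) • d) :
    ∃ l : E → Fin 3, (∀ i, l (v i) = i) ∧ (∀ x ∈ K.vertices, ∀ j, β j x = 0 → l x ≠ j) ∧
      Set.InjOn l (σ : Set E) ∧
      ∀ τ ∈ K.faces, τ.card = 3 → Set.InjOn l (τ : Set E) → τ = σ := by
  classical
  obtain ⟨h, hh⟩ := S.main
  have hne : ∀ x ∈ VV K v, x ≠ c := fun x hx e => S.cV (e ▸ hx)
  have side : ∀ x y i, x ∈ VV K v → y ∈ VV K v → β i x = 0 → β i y = 0 →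
      |h y - h x + 3 * mm c x y| ≤ 1 := by
    intro x y i hx hy h1 h2
    by_cases hxy : x = y
    · subst hxy
      rw [mm_self c x (hne x hx)]
      simp
    · exact hh x y ⟨hxy, Or.inr ⟨i, hx, hy, h1, h2⟩⟩
  have edge : ∀ τ ∈ K.faces, ∀ x ∈ τ, ∀ y ∈ τ, x ≠ y → |h y - h x + 3 * mm c x y| ≤ 1 := by
    intro τ hτ x hx y hy hxy
    refine hh x y ⟨hxy, Or.inl ⟨{x, y}, K.down_closed hτ ?_ (by simp), by simp⟩⟩
    intro z hz
    simp only [Finset.mem_insert, Finset.mem_singleton] at hz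
    rcases hz with rfl | rfl
    · exact hx
    · exact hy
  have hvV : ∀ i, v i ∈ VV K v := fun i => Or.inr ⟨i, rfl⟩
  have hk := tri_ne (S.cpos 0) (S.cpos 1) (S.cpos 2) (S.sum c) hcc hcv
  have c01 := abs_le.1 (side (v 0) (v 1) 2 (hvV _) (hvV _) (S.ne _ _ (by decide)) (S.ne _ _ (by decide)))
  have c12 := abs_le.1 (side (v 1) (v 2) 0 (hvV _) (hvV _) (S.ne _ _ (by decide)) (S.ne _ _ (by decide)))
  have c20 := abs_le.1 (side (v 2) (v 0) 1 (hvV _) (hvV _) (S.ne _ _ (by decide)) (S.ne _ _ (by decide)))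
  set k : ℤ := mm c (v 0) (v 1) + mm c (v 1) (v 2) + mm c (v 2) (v 0) with hkdef
  have hk1 : k = 1 ∨ k = -1 := by omega
  have lab0 : ∀ x y, lab (k * (h x - h (v 0))) = lab (k * (h y - h (v 0))) ↔
      (h x - h y) % 3 = 0 := by
    intro x y
    rw [lab_eq]
    rcases hk1 with e | e <;> rw [e] <;> omega
  have labv : ∀ i, lab (k * (h (v i) - h (v 0))) = i := by
    intro i
    rw [lab_iff]
    fin_cases i
    · simp
    · show k * (h (v 1) - h (v 0)) % 3 = ((1 : ℕ) : ℤ)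
      rcases hk1 with e | e <;> rw [e] <;> omega
    · show k * (h (v 2) - h (v 0)) % 3 = ((2 : ℕ) : ℤ)
      rcases hk1 with e | e <;> rw [e] <;> omega
  refine ⟨fun x => lab (k * (h x - h (v 0))), labv, ?_, ?_, ?_⟩
  · intro x hx j hj hlj
    simp only at hlj
    have hjx := hlj.trans (labv j).symm
    rw [lab0] at hjx
    have hxV : x ∈ VV K v := Or.inl hx
    have gen : ∀ p q : Fin 3, j ≠ p → j ≠ q →
        mm c (v p) x + mm c x (v q) + mm c (v q) (v p) = 0 ∧
        |h x - h (v p) + 3 * mm c (v p) x| ≤ 1 ∧ |h (v q) - h x + 3 * mm c x (v q)| ≤ 1 ∧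
        mm c (v q) (v p) = - mm c (v p) (v q) := by
      intro p q hp hq
      have sv : ∀ p, j ≠ p → v p ∈ Sd v β j := fun p hp => ⟨S.vsub (hvV p), S.ne _ _ hp⟩
      have sx : x ∈ Sd v β j := ⟨S.vsub hxV, hj⟩
      refine ⟨tri_zero ?_, side _ _ j (hvV _) hxV (S.ne _ _ hp) hj,
        side _ _ j hxV (hvV _) hj (S.ne _ _ hq), mm_anti ?_⟩
      · intro hmem
        refine (sd_props S j).2.2 (convexHull_min ?_ (sd_props S j).1 hmem)
        rintro z (rfl | rfl | rfl)
        · exact sv _ hp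
        · exact sx
        · exact sv _ hq
      · intro hmem
        exact (sd_props S j).2.2 ((sd_props S j).1.segment_subset (sv _ hp) (sv _ hq) hmem)
    fin_cases j
    · obtain ⟨g1, g2, g3, g4⟩ := gen 1 2 (by decide) (by decide)
      rw [abs_le] at g2 g3
      simp only [Fin.zero_eta] at hjx
      omega
    · obtain ⟨g1, g2, g3, g4⟩ := gen 2 0 (by decide) (by decide)
      rw [abs_le] at g2 g3
      simp only [Fin.mk_one] at hjx
      omega
    · obtain ⟨g1, g2, g3, g4⟩ := gen 0 1 (by decide) (by decide)
      rw [abs_le] at g2 g3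
      simp only [Fin.reduceFinMk] at hjx
      omega
  · have hs := tri_ne (wa := 1/3) (wb := 1/3) (wd := 1/3) (by norm_num) (by norm_num) (by norm_num)
      (by norm_num) hc hcr
    have hσ' : σ = {a, b, d} := by
      apply Finset.coe_injective
      rw [hσe]; simp
    have e1 := abs_le.1 (edge σ hσ a (by simp [hσ']) b (by simp [hσ']) hab)
    have e2 := abs_le.1 (edge σ hσ b (by simp [hσ']) d (by simp [hσ']) hbd)
    have e3 := abs_le.1 (edge σ hσ d (by simp [hσ']) a (by simp [hσ']) had.symm)
    intro x hx y hy hxy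
    simp only at hxy
    rw [lab0] at hxy
    rw [hσe] at hx hy
    rcases hx with rfl | rfl | rfl <;> rcases hy with rfl | rfl | rfl <;>
      first
      | rfl
      | (exfalso; omega)
  · intro τ hτ hτ3 hinj
    by_contra hne'
    obtain ⟨x, y, z, hxy, hxz, hyz, rfl⟩ := Finset.card_eq_three.1 hτ3
    have hct : c ∉ convexHull ℝ ({x, y, z} : Set E) := by
      intro hmem
      apply hne'
      have := face_of_centroid hσ hσe hτ hcr hc (by simpa using hmem)
      exact (Finset.eq_of_subset_of_card_le this (by rw [hτ3, hσ3])).symm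
    have hz := tri_zero hct
    have e1 := abs_le.1 (edge _ hτ x (by simp) y (by simp) hxy)
    have e2 := abs_le.1 (edge _ hτ y (by simp) z (by simp) hyz)
    have e3 := abs_le.1 (edge _ hτ z (by simp) x (by simp) hxz.symm)
    have i1 : ¬ (h x - h y) % 3 = 0 := by
      rw [← lab0]
      exact fun e => hxy (hinj (by simp) (by simp) e)
    have i2 : ¬ (h y - h z) % 3 = 0 := by
      rw [← lab0]
      exact fun e => hyz (hinj (by simp) (by simp) e)
    have i3 : ¬ (h x - h z) % 3 = 0 := by
      rw [← lab0]
      exact fun e => hxz (hinj (by simp) (by simp) e)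
    omega

lemma ind3 {a b d : E} {σ : Finset E} (hab : a ≠ b) (had : a ≠ d) (hbd : b ≠ d)
    (hσ' : (σ : Set E) = {a, b, d}) (h : AffineIndependent ℝ ((↑) : σ → E)) :
    AffineIndependent ℝ ![a, b, d] := by
  have hm : ∀ i, (![a, b, d] : Fin 3 → E) i ∈ σ := by
    intro i
    have : (![a, b, d] : Fin 3 → E) i ∈ (σ : Set E) := by
      rw [hσ']
      fin_cases i <;> simp
    exact this
  have hinj : Function.Injective (fun i => (⟨(![a, b, d] : Fin 3 → E) i, hm i⟩ : σ)) := by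
    intro i j hij
    have hij' : (![a, b, d] : Fin 3 → E) i = (![a, b, d] : Fin 3 → E) j := congrArg Subtype.val hij
    clear hij
    fin_cases i <;> fin_cases j
    · rfl
    · exact absurd hij' hab
    · exact absurd hij' had
    · exact absurd hij'.symm hab
    · rfl
    · exact absurd hij' hbd
    · exact absurd hij'.symm had
    · exact absurd hij'.symm hbd
    · rfl
  exact h.comp_embedding ⟨_, hinj⟩

end SpProof

open SpProof

/-- Theorem 1.3: for every triangulation `K` of `Δ²` and every facet `σ` of `K`,
there is a Sperner labelling of `K` in which `σ` is the unique rainbow facet. -/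
theorem sperner_2d_unique_rainbow (T : SimplexTriangulation 2)
    (σ : Finset (EuclideanSpace ℝ (Fin 2))) (hσ : T.IsFacet σ) :
    ∃ l : EuclideanSpace ℝ (Fin 2) → Fin 3, T.IsSperner l ∧ Rainbow l σ ∧
      ∀ τ, T.IsFacet τ → Rainbow l τ → τ = σ := by
  classical
  obtain ⟨hσf, hσ3⟩ := hσ
  have span3 : ∀ w : Fin 3 → E, AffineIndependent ℝ w → affineSpan ℝ (Set.range w) = ⊤ := by
    intro w hw
    rw [hw.affineSpan_eq_top_iff_card_eq_finrank_add_one]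
    simp
  let B : AffineBasis (Fin 3) ℝ E := ⟨T.corner, T.indep, span3 _ T.indep⟩
  have hB : ∀ i, B i = T.corner i := fun i => rfl
  obtain ⟨a, b, d, hab, had, hbd, hσ'⟩ := Finset.card_eq_three.1 hσ3
  have hσe : (σ : Set E) = {a, b, d} := by rw [hσ']; simp
  have hind : AffineIndependent ℝ ![a, b, d] := by
    exact ind3 hab had hbd hσe (T.K.indep hσf)
  have hcr := cross_ne hind
  have hcv : cross (F (T.corner 1) - F (T.corner 0)) (F (T.corner 2) - F (T.corner 0)) ≠ 0 := by
    apply cross_ne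
    convert T.indep using 1
    ext i
    fin_cases i <;> rfl
  obtain ⟨c, hc⟩ : ∃ c : E, c = (1/3:ℝ) • a + (1/3:ℝ) • b + (1/3:ℝ) • d := ⟨_, rfl⟩
  have hmem : ∀ x, x ∈ convexHull ℝ (Set.range T.corner) ↔ ∀ i, 0 ≤ B.coord i x := by
    intro x
    have := B.convexHull_eq_nonneg_coord
    have h2 : Set.range B = Set.range T.corner := rfl
    rw [h2] at this
    rw [this]
    rfl
  have hsub : T.K.vertices ⊆ convexHull ℝ (Set.range T.corner) := by
    rw [← T.space_eq]
    exact T.K.vertices_subset_space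
  have hver : ∀ x ∈ σ, ∀ i, 0 ≤ B.coord i x := by
    intro x hx
    rw [← hmem]
    exact hsub (T.K.down_closed hσf (by simpa using hx) (by simp))
  have S : Setup T.K T.corner B.coord c := by
    refine ⟨hmem, fun i => B.coord_apply_eq i, fun i j hij => B.coord_apply_ne hij,
      fun x y h => B.ext_elem h, fun x => ?_, T.finite, hsub, fun i => ?_, ?_⟩
    · have := B.sum_coord_apply_eq_one x
      rw [Fin.sum_univ_three] at this
      exact this
    · have ha := hver a (by simp [hσ']) i
      have hb := hver b (by simp [hσ']) i
      have hd := hver d (by simp [hσ']) i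
      have hci : B.coord i c = (1/3) * B.coord i a + (1/3) * B.coord i b + (1/3) * B.coord i d := by
        have e : c = (2/3:ℝ) • ((1/2:ℝ) • a + (1/2:ℝ) • b) + (1/3:ℝ) • d := by
          rw [hc]; module
        rw [e, Convex.combo_affine_apply (by norm_num), Convex.combo_affine_apply (by norm_num)]
        simp only [smul_eq_mul]
        ring
      by_contra hneg
      have ha0 : B.coord i a = 0 := by linarith
      have hb0 : B.coord i b = 0 := by linarith
      have hd0 : B.coord i d = 0 := by linarith
      have hall : B.coord i (T.corner i) = 0 := by
        have hin : T.corner i ∈ affineSpan ℝ (Set.range ![a, b, d]) := by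
          rw [span3 _ hind]
          exact AffineSubspace.mem_top ℝ E _
        refine affineSpan_induction (p := fun x => B.coord i x = 0) hin ?_ ?_
        · rintro x ⟨j, rfl⟩
          fin_cases j
          · exact ha0
          · exact hb0
          · exact hd0
        · intro t u w z hu hw hz
          rw [AffineMap.map_vadd, map_smul, AffineMap.linearMap_vsub, hu, hw, hz]
          simp
      rw [← hB i, B.coord_apply_eq] at hall
      exact one_ne_zero hall
    · intro s hs hs2 hmem
      have := Finset.card_le_card (face_of_centroid hσf hσe hs hcr hc hmem)
      omega
  have hcc : c = B.coord 0 c • T.corner 0 + B.coord 1 c • T.corner 1 + B.coord 2 c • T.corner 2 := by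
    have := B.linear_combination_coord_eq_self c
    rw [Fin.sum_univ_three] at this
    exact this.symm
  obtain ⟨l, h1, h2, h3, h4⟩ := S.final hcv hcc hσf hσe hσ3 hab had hbd hcr hc
  refine ⟨l, ⟨h1, ?_⟩, h3, fun τ hτ hr => h4 τ hτ.1 hτ.2 hr⟩
  intro x hx s hxs
  refine ⟨l x, ?_, rfl⟩
  by_contra hls
  refine h2 x hx (l x) ?_ rfl
  have hconv : Convex ℝ {z : E | B.coord (l x) z = 0} := by
    intro y hy z hz p q hp hq hpq
    simp only [Set.mem_setOf_eq] at hy hz ⊢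
    rw [Convex.combo_affine_apply hpq, hy, hz]
    simp
  refine convexHull_min ?_ hconv hxs
  rintro _ ⟨j, hj, rfl⟩
  exact B.coord_apply_ne (fun e => hls (e ▸ hj))
end

section
/- For every d ≥ 3 there exists a finite triangulation K of the d-simplex Δ^d and a facet σ of K such that every Sperner labelling of K has a rainbow facet distinct from σ; consequently, by Proposition (criticality equivalence), Gallai's graph G_K is (d+2)-chromatic but not (d+2)-critical. -/
open Geometry

namespace SimplexTriangulation

variable {d : ℕ}

/-- Vertices of Gallai's graph `G_K`: (V1) vertices of `K`, (V2) a vertex `v_ρ`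
for each facet `ρ` of `K`, (V3) a vertex `w_σ` for each of the `d+1` facets of
`Δ^d` (indexed by the opposite corner). -/
def GallaiVertex (T : SimplexTriangulation d) : Type :=
  ↥T.K.vertices ⊕ {σ // T.IsFacet σ} ⊕ Fin (d + 1)

/-- The generating relation of Gallai's graph: `u ∼ v_ρ` when `u ∈ ρ`;
`u ∼ w_j` when `u` lies in the facet of `Δ^d` opposite to corner `j`;
and all pairs of type-(V3) vertices are adjacent. -/
def gallaiRel (T : SimplexTriangulation d) :
    T.GallaiVertex → T.GallaiVertex → Prop
  | Sum.inl u, Sum.inr (Sum.inl ρ) => (u : EuclideanSpace ℝ (Fin d)) ∈ ρ.1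
  | Sum.inl u, Sum.inr (Sum.inr j) =>
      (u : EuclideanSpace ℝ (Fin d)) ∈ convexHull ℝ (T.corner '' {i | i ≠ j})
  | Sum.inr (Sum.inr _), Sum.inr (Sum.inr _) => True
  | _, _ => False

/-- Gallai's graph `G_K` associated with a triangulation `K` of `Δ^d`. -/
def GallaiGraph (T : SimplexTriangulation d) : SimpleGraph T.GallaiVertex :=
  SimpleGraph.fromRel (gallaiRel T)

end SimplexTriangulation

/-! ### Regular triangulations -/

/-- Certificate that a family of simplices (indexed by `F`, each with vertices indexed by `J`)
is the regular triangulation of `convexHull ℝ S` induced by the heights `h`. -/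
structure RegData (E : Type) [AddCommGroup E] [Module ℝ E] (V F J : Type)
    [Fintype J] [DecidableEq J] (S : Set E) where
  pt : V → E
  fac : F → J → V
  bc : F → J → (E →ᵃ[ℝ] ℝ)
  h : V → ℝ
  delta : ∀ f i j, bc f i (pt (fac f j)) = if i = j then 1 else 0
  sum_one : ∀ f x, ∑ i, bc f i x = 1
  sum_pt : ∀ f x, ∑ i, bc f i x • pt (fac f i) = x
  lower : ∀ f w, w ∉ Set.range (fac f) → ∑ i, bc f i (pt w) * h (fac f i) < h w
  ridge : ∀ f i, (∃ g, (∀ j, j ≠ i → fac f j ∈ Set.range (fac g)) ∧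
      fac f i ∉ Set.range (fac g)) ∨ ∀ x ∈ S, 0 ≤ bc f i x
  mem : ∀ v, pt v ∈ convexHull ℝ S

theorem affine_sum_apply {E : Type} [AddCommGroup E] [Module ℝ E] {J : Type} [Fintype J]
    (A : E →ᵃ[ℝ] ℝ) (c : J → ℝ) (p : J → E) (hc : ∑ i, c i = 1) :
    A (∑ i, c i • p i) = ∑ i, c i * A (p i) := by
  have hA : ∀ y, A y = A.linear y + A 0 := fun y => congrFun A.decomp y
  rw [hA, map_sum]
  simp_rw [hA (p _), mul_add]
  rw [Finset.sum_add_distrib, ← Finset.sum_mul, hc, one_mul]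
  simp

theorem affine_convex_nonneg {E : Type} [AddCommGroup E] [Module ℝ E]
    (A : E →ᵃ[ℝ] ℝ) (S : Set E) (hS : ∀ x ∈ S, 0 ≤ A x) : ∀ x ∈ convexHull ℝ S, 0 ≤ A x := by
  have : convexHull ℝ S ⊆ A ⁻¹' (Set.Ici 0) :=
    convexHull_min hS ((convex_Ici (0 : ℝ)).affine_preimage A)
  exact fun x hx => this hx

namespace RegData

variable {E : Type} [AddCommGroup E] [Module ℝ E] {V F J : Type}
    [Fintype J] [DecidableEq J] {S : Set E} (R : RegData E V F J S)

/-- the points of a facet -/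
def q (f : F) (i : J) : E := R.pt (R.fac f i)

theorem q_inj (f : F) : Function.Injective (R.q f) := by
  intro i j hij
  have h1 := R.delta f i i
  have h2 := R.delta f i j
  unfold q at hij
  rw [hij, h2] at h1
  by_contra hne
  simp [hne] at h1

theorem affine_eq (f : F) (A : E →ᵃ[ℝ] ℝ) (x : E) :
    A x = ∑ i, R.bc f i x * A (R.q f i) := by
  conv_lhs => rw [← R.sum_pt f x]
  exact affine_sum_apply A _ _ (R.sum_one f x)

/-- the affine function interpolating the heights on a facet -/
def lf (f : F) (x : E) : ℝ := ∑ i, R.bc f i x * R.h (R.fac f i)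

theorem lf_eq (f g : F) (x : E) :
    R.lf f x = ∑ j, R.bc g j x * R.lf f (R.q g j) := by
  unfold lf
  simp_rw [R.affine_eq g (R.bc f _) x, Finset.sum_mul, Finset.mul_sum]
  rw [Finset.sum_comm]
  simp_rw [mul_assoc]

theorem lf_range (f : F) (w : V) (hw : w ∈ Set.range (R.fac f)) : R.lf f (R.pt w) = R.h w := by
  obtain ⟨j, rfl⟩ := hw
  simp [lf, R.delta]

theorem lf_le (f : F) (w : V) : R.lf f (R.pt w) ≤ R.h w := by
  by_cases hw : w ∈ Set.range (R.fac f)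
  · exact (R.lf_range f w hw).le
  · exact (R.lower f w hw).le

theorem coords_of_mem (f : F) (s : Set E) (hs : s ⊆ Set.range (R.q f)) (x : E)
    (hx : x ∈ convexHull ℝ s) (i : J) :
    0 ≤ R.bc f i x ∧ (R.bc f i x ≠ 0 → R.q f i ∈ s) := by
  have hpos : ∀ y ∈ s, 0 ≤ R.bc f i y := by
    intro y hy
    obtain ⟨j, rfl⟩ := hs hy
    simp only [q, R.delta]
    split_ifs <;> norm_num
  refine ⟨affine_convex_nonneg _ s hpos x hx, ?_⟩
  contrapose!
  intro hi
  have hz : ∀ y ∈ s, 0 ≤ (-(R.bc f i)) y := by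
    intro y hy
    obtain ⟨j, rfl⟩ := hs hy
    have : i ≠ j := fun h => hi (h ▸ hy)
    simp [q, R.delta, this]
  have h1 := affine_convex_nonneg _ s hz x hx
  have h2 := affine_convex_nonneg _ s hpos x hx
  simp at h1
  linarith

theorem mem_of_coords (f : F) (u : Set E) (x : E) (h0 : ∀ i, 0 ≤ R.bc f i x)
    (hu : ∀ i, R.bc f i x ≠ 0 → R.q f i ∈ u) : x ∈ convexHull ℝ u := by
  classical
  have h1 : ∑ i ∈ Finset.univ.filter (fun i => R.bc f i x ≠ 0), R.bc f i x = 1 := by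
    rw [Finset.sum_filter_ne_zero, R.sum_one]
  have h2 : ∑ i ∈ Finset.univ.filter (fun i => R.bc f i x ≠ 0), R.bc f i x • R.q f i = x := by
    conv_rhs => rw [← R.sum_pt f x]
    rw [Finset.sum_filter]
    refine Finset.sum_congr rfl fun i _ => ?_
    by_cases h : R.bc f i x = 0 <;> simp [h, q]
  rw [← h2]
  refine (convex_convexHull ℝ u).sum_mem (fun i _ => h0 i) h1 fun i hi => ?_
  exact subset_convexHull ℝ u (hu i (Finset.mem_filter.1 hi).2)

theorem lf_cmp (f g : F) (x : E) (hg : ∀ j, 0 ≤ R.bc g j x) : R.lf f x ≤ R.lf g x := by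
  rw [R.lf_eq f g x]
  exact Finset.sum_le_sum fun j _ => mul_le_mul_of_nonneg_left (R.lf_le f _) (hg j)

theorem supp_of_mem (f g : F) (x : E) (hf : ∀ j, 0 ≤ R.bc f j x) (hg : ∀ j, 0 ≤ R.bc g j x)
    (j : J) (hj : R.bc g j x ≠ 0) : R.fac g j ∈ Set.range (R.fac f) := by
  by_contra hn
  have h1 := R.lf_cmp g f x hf
  have h2 : R.lf f x < R.lf g x := by
    rw [R.lf_eq f g x]
    refine Finset.sum_lt_sum
      (fun j _ => mul_le_mul_of_nonneg_left (R.lf_le f _) (hg j)) ⟨j, Finset.mem_univ _, ?_⟩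
    exact mul_lt_mul_of_pos_left (R.lower f _ hn) (lt_of_le_of_ne (hg j) (Ne.symm hj))
  linarith

theorem inter (f g : F) (s t : Set E) (hs : s ⊆ Set.range (R.q f)) (ht : t ⊆ Set.range (R.q g)) :
    convexHull ℝ s ∩ convexHull ℝ t ⊆ convexHull ℝ (s ∩ t) := by
  rintro x ⟨hxs, hxt⟩
  have hf := R.coords_of_mem f s hs x hxs
  have hg := R.coords_of_mem g t ht x hxt
  refine R.mem_of_coords f _ x (fun i => (hf i).1) fun i hi => ⟨(hf i).2 hi, ?_⟩
  obtain ⟨j, hj⟩ := R.supp_of_mem g f x (fun j => (hg j).1) (fun j => (hf j).1) i hi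
  have hq : R.q f i = R.q g j := by simp [q, hj]
  rw [hq]
  apply (hg j).2
  intro h0
  apply hi
  rw [R.affine_eq g (R.bc f i) x]
  refine Finset.sum_eq_zero fun k _ => ?_
  by_cases hk : R.bc g k x = 0
  · simp [hk]
  · obtain ⟨i', hi'⟩ := R.supp_of_mem f g x (fun j => (hf j).1) (fun j => (hg j).1) k hk
    have : i ≠ i' := by
      rintro rfl
      have : k = j := R.q_inj g (by rw [← hq]; simp [q, hi'])
      exact hk (this ▸ h0)
    simp [q, ← hi', R.delta, this]

theorem indep (f : F) : AffineIndependent ℝ (R.q f) := by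
  rw [affineIndependent_iff]
  intro s w hw hs e he
  have hA : ∀ y, R.bc f e y = (R.bc f e).linear y + R.bc f e 0 :=
    fun y => congrFun (R.bc f e).decomp y
  have h1 : (R.bc f e).linear (∑ e ∈ s, w e • R.q f e) = 0 := by rw [hs, map_zero]
  rw [map_sum] at h1
  have h2 : ∀ j, (R.bc f e).linear (R.q f j) = (if e = j then 1 else 0) - R.bc f e 0 := by
    intro j
    rw [← R.delta f e j, hA (R.pt _)]
    simp [q]
  simp only [map_smul, h2, smul_eq_mul, mul_sub] at h1
  rw [Finset.sum_sub_distrib, ← Finset.sum_mul, hw] at h1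
  simpa [he] using h1

theorem cover [Finite F] [Nonempty F] (x : E) (hx : x ∈ convexHull ℝ S) :
    ∃ f, ∀ i, 0 ≤ R.bc f i x := by
  obtain ⟨f, hf⟩ := Finite.exists_max (fun f => R.lf f x)
  refine ⟨f, fun i => ?_⟩
  by_contra! hneg
  rcases R.ridge f i with ⟨g, hg1, hg2⟩ | h
  · have h1 := hf g
    have h2 : R.lf f x < R.lf g x := by
      rw [R.lf_eq g f x]
      refine Finset.sum_lt_sum (fun j _ => ?_) ⟨i, Finset.mem_univ _, ?_⟩
      · by_cases hj : j = i
        · subst hj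
          exact mul_le_mul_of_nonpos_left (R.lf_le g _) hneg.le
        · exact (congrArg _ (R.lf_range g _ (hg1 j hj))).symm.le
      · exact mul_lt_mul_of_neg_left (R.lower g _ hg2) hneg
    linarith
  · exact absurd (affine_convex_nonneg _ S h x hx) (not_le.2 hneg)

/-- the simplicial complex of a regular triangulation -/
def complex : Geometry.SimplicialComplex ℝ E where
  faces := {s | s.Nonempty ∧ ∃ f, (s : Set E) ⊆ Set.range (R.q f)}
  isRelLowerSet_faces := by
    rintro s ⟨hs, f, hf⟩
    exact ⟨hs, fun t hts ht => ⟨ht, f, (Finset.coe_subset.2 hts).trans hf⟩⟩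
  indep := by
    rintro s ⟨-, f, hf⟩
    exact (R.indep f).range.mono hf
  inter_subset_convexHull := by
    rintro s t ⟨-, f, hf⟩ ⟨-, g, hg⟩
    exact R.inter f g _ _ hf hg

theorem complex_finite [Finite F] : R.complex.faces.Finite := by
  classical
  have : R.complex.faces ⊆ ⋃ f : F, {s : Finset E | (s : Set E) ⊆ Set.range (R.q f)} := by
    rintro s ⟨-, f, hf⟩
    exact Set.mem_iUnion.2 ⟨f, hf⟩
  refine Set.Finite.subset (Set.finite_iUnion fun f => ?_) this
  have h2 : {s : Finset E | (s : Set E) ⊆ Set.range (R.q f)} ⊆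
      ((Finset.univ.image (R.q f)).powerset : Set (Finset E)) := by
    intro s hs
    simp only [Finset.coe_powerset, Set.mem_preimage, Set.mem_powerset_iff]
    simpa using hs
  exact (Finset.finite_toSet _).subset h2

theorem complex_space [Finite F] [Nonempty F] [Nonempty J] :
    R.complex.space = convexHull ℝ S := by
  classical
  apply Set.Subset.antisymm
  · intro x hx
    obtain ⟨s, ⟨-, f, hf⟩, hx⟩ := Geometry.SimplicialComplex.mem_space_iff.1 hx
    refine convexHull_min ?_ (convex_convexHull ℝ S) hx
    intro y hy
    obtain ⟨i, rfl⟩ := hf hy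
    exact R.mem _
  · intro x hx
    obtain ⟨f, hf⟩ := R.cover x hx
    refine Geometry.SimplicialComplex.mem_space_iff.2 ⟨Finset.univ.image (R.q f), ⟨?_, f, ?_⟩, ?_⟩
    · exact Finset.univ_nonempty.image _
    · simp
    · exact R.mem_of_coords f _ x hf (by simp)

end RegData

/-! ### From Sperner labellings to Gallai's graph -/

theorem not_colorable_aux {d : ℕ} (T : SimplexTriangulation d)
    (hcorner : ∀ i, T.corner i ∈ T.K.vertices)
    (σ : Finset (EuclideanSpace ℝ (Fin d)))
    (hS : ∀ l : EuclideanSpace ℝ (Fin d) → Fin (d + 1), T.IsSperner l →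
        ∃ τ, T.IsFacet τ ∧ τ ≠ σ ∧ Rainbow l τ)
    (H : SimpleGraph T.GallaiVertex)
    (h12 : ∀ (u : ↥T.K.vertices) (ρ : {σ // T.IsFacet σ}), ρ.1 ≠ σ →
      (u : EuclideanSpace ℝ (Fin d)) ∈ ρ.1 → H.Adj (Sum.inl u) (Sum.inr (Sum.inl ρ)))
    (h13 : ∀ (u : ↥T.K.vertices) (j : Fin (d + 1)),
      (u : EuclideanSpace ℝ (Fin d)) ∈ convexHull ℝ (T.corner '' {i | i ≠ j}) →
        H.Adj (Sum.inl u) (Sum.inr (Sum.inr j)))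
    (h33 : ∀ i j : Fin (d + 1), i ≠ j →
      H.Adj (Sum.inr (Sum.inr i)) (Sum.inr (Sum.inr j))) :
    ¬ H.Colorable (d + 1) := by
  classical
  rintro ⟨c⟩
  let cw : Fin (d + 1) → Fin (d + 1) := fun j => c (Sum.inr (Sum.inr j))
  have hcw : Function.Injective cw := by
    intro i j hij
    by_contra hne
    exact c.valid (h33 i j hne) hij
  have hbij : Function.Bijective cw := Finite.injective_iff_bijective.1 hcw
  let e := Equiv.ofBijective cw hbij
  let cu : T.K.vertices → Fin (d + 1) := fun u => c (Sum.inl u)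
  let l : EuclideanSpace ℝ (Fin d) → Fin (d + 1) :=
    fun x => if hx : x ∈ T.K.vertices then e.symm (cu ⟨x, hx⟩) else 0
  have hl : ∀ x (hx : x ∈ T.K.vertices), cw (l x) = cu ⟨x, hx⟩ := by
    intro x hx
    have : l x = e.symm (cu ⟨x, hx⟩) := by simp only [l, hx, dif_pos]
    rw [this]
    exact e.apply_symm_apply _
  have key : ∀ x ∈ T.K.vertices, ∀ s : Set (Fin (d + 1)),
      x ∈ convexHull ℝ (T.corner '' s) → ∃ i ∈ s, l x = i := by
    intro x hx s hxs
    refine ⟨l x, ?_, rfl⟩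
    by_contra hn
    have hmem : x ∈ convexHull ℝ (T.corner '' {i | i ≠ l x}) := by
      refine convexHull_mono (Set.image_mono ?_) hxs
      intro i hi heq
      exact hn (heq ▸ hi)
    exact c.valid (h13 ⟨x, hx⟩ (l x) hmem) (hl x hx).symm
  have hsp : T.IsSperner l := by
    refine ⟨fun i => ?_, key⟩
    obtain ⟨j, hj, hlj⟩ := key (T.corner i) (hcorner i) {i}
      (subset_convexHull ℝ _ ⟨i, rfl, rfl⟩)
    rw [hlj]
    exact hj
  obtain ⟨τ, hτ, hne, hr⟩ := hS l hsp
  have himg : τ.image l = Finset.univ := by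
    apply Finset.eq_univ_of_card
    rw [Finset.card_image_of_injOn hr, hτ.2, Fintype.card_fin]
  obtain ⟨k, hk⟩ := hbij.2 (c (Sum.inr (Sum.inl ⟨τ, hτ⟩)))
  have hk2 : k ∈ τ.image l := himg ▸ Finset.mem_univ k
  obtain ⟨x, hx, hlx⟩ := Finset.mem_image.1 hk2
  have hxv : x ∈ T.K.vertices :=
    T.K.down_closed hτ.1 (Finset.singleton_subset_iff.2 hx) (Finset.singleton_nonempty x)
  refine c.valid (h12 ⟨x, hxv⟩ ⟨τ, hτ⟩ hne hx) ?_
  rw [← hk, ← hlx]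
  exact (hl x hxv).symm

theorem gallai_adj {d : ℕ} (T : SimplexTriangulation d) (a b : T.GallaiVertex) :
    T.GallaiGraph.Adj a b ↔ a ≠ b ∧ (T.gallaiRel a b ∨ T.gallaiRel b a) :=
  SimpleGraph.fromRel_adj _ _ _

theorem gallai_colorable {d : ℕ} (T : SimplexTriangulation d) :
    T.GallaiGraph.Colorable (d + 2) := by
  let c : T.GallaiVertex → Fin (d + 2) := fun a =>
    match a with
    | Sum.inl _ => Fin.last (d + 1)
    | Sum.inr (Sum.inl _) => 0
    | Sum.inr (Sum.inr j) => j.castSucc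
  have hc : ∀ a b, a ≠ b → T.gallaiRel a b → c a ≠ c b := by
    intro a b hab hr
    rcases a with u | ρ | i <;> rcases b with u' | ρ' | j
    all_goals first | exact (hr : False).elim | skip
    · exact (Fin.last_pos).ne'
    · exact (Fin.castSucc_lt_last j).ne'
    · intro h
      apply hab
      rw [Fin.castSucc_injective _ h]
  refine ⟨SimpleGraph.Coloring.mk c ?_⟩
  intro a b hab
  rw [gallai_adj] at hab
  rcases hab.2 with h | h
  · exact hc a b hab.1 h
  · exact (hc b a hab.1.symm h).symm

theorem gallai_part {d : ℕ} (T : SimplexTriangulation d)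
    (hcorner : ∀ i, T.corner i ∈ T.K.vertices)
    (σ : Finset (EuclideanSpace ℝ (Fin d))) (hσ : T.IsFacet σ)
    (hS : ∀ l : EuclideanSpace ℝ (Fin d) → Fin (d + 1), T.IsSperner l →
        ∃ τ, T.IsFacet τ ∧ τ ≠ σ ∧ Rainbow l τ) :
    (T.GallaiGraph).chromaticNumber = (d + 2 : ℕ) ∧
      ¬ ((T.GallaiGraph).Colorable (d + 2) ∧
          ¬ (T.GallaiGraph).Colorable (d + 1) ∧
          ∀ e ∈ (T.GallaiGraph).edgeSet,
            ((T.GallaiGraph).deleteEdges {e}).Colorable (d + 1)) := by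
  obtain ⟨x, hx⟩ := T.K.nonempty_of_mem_faces hσ.1
  have hxv : x ∈ T.K.vertices :=
    T.K.down_closed hσ.1 (Finset.singleton_subset_iff.2 hx) (Finset.singleton_nonempty x)
  let a : T.GallaiVertex := Sum.inl ⟨x, hxv⟩
  let b : T.GallaiVertex := Sum.inr (Sum.inl ⟨σ, hσ⟩)
  have hab : T.GallaiGraph.Adj a b := by
    rw [gallai_adj]
    exact ⟨Sum.inl_ne_inr, Or.inl hx⟩
  have hadj : ∀ p q : T.GallaiVertex, p ≠ q → T.gallaiRel p q → ¬ (p = a ∧ q = b) →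
      ¬ (p = b ∧ q = a) → ((T.GallaiGraph).deleteEdges {s(a, b)}).Adj p q := by
    intro p q hpq hr h1 h2
    rw [SimpleGraph.deleteEdges_adj, gallai_adj]
    refine ⟨⟨hpq, Or.inl hr⟩, ?_⟩
    simp only [Set.mem_singleton_iff, Sym2.eq_iff, not_or]
    exact ⟨h1, h2⟩
  have hdel : ¬ ((T.GallaiGraph).deleteEdges {s(a, b)}).Colorable (d + 1) := by
    apply not_colorable_aux T hcorner σ hS
    · intro u ρ hρ hu
      refine hadj _ _ Sum.inl_ne_inr hu (fun h => hρ ?_) (fun h => Sum.inl_ne_inr h.1)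
      exact congrArg Subtype.val (Sum.inl_injective (Sum.inr_injective h.2))
    · intro u j hu
      exact hadj _ _ Sum.inl_ne_inr hu (fun h => Sum.inr_ne_inl (Sum.inr_injective h.2))
        (fun h => Sum.inl_ne_inr h.1)
    · intro i j hij
      exact hadj _ _ (fun h => hij (Sum.inr_injective (Sum.inr_injective h))) trivial
        (fun h => Sum.inr_ne_inl h.1) (fun h => Sum.inr_ne_inl h.2)
  have hnot : ¬ T.GallaiGraph.Colorable (d + 1) := fun h =>
    hdel (h.mono_left (SimpleGraph.deleteEdges_le _))
  refine ⟨?_, fun h => hdel (h.2.2 _ hab)⟩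
  apply le_antisymm (gallai_colorable T).chromaticNumber_le
  by_contra! hlt
  have : T.GallaiGraph.chromaticNumber ≤ ((d + 1 : ℕ) : ℕ∞) := by
    have h2 : ((d + 2 : ℕ) : ℕ∞) = ((d + 1 : ℕ) : ℕ∞) + 1 := by push_cast; ring
    rw [h2] at hlt
    exact Order.le_of_lt_add_one hlt
  exact hnot (SimpleGraph.chromaticNumber_le_iff_colorable.1 this)

/-! ### The three-dimensional example: data -/

/-- barycentric coordinates (times 60) of the twelve vertices -/
def pc : Fin 12 → Fin 4 → ℤ :=
  ![![60, 0, 0, 0],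
    ![0, 60, 0, 0],
    ![0, 0, 60, 0],
    ![0, 0, 0, 60],
    ![21, 11, 0, 28],
    ![28, 23, 0, 9],
    ![9, 40, 5, 6],
    ![0, 0, 44, 16],
    ![3, 3, 7, 47],
    ![53, 0, 7, 0],
    ![4, 27, 27, 2],
    ![0, 13, 47, 0]]

/-- heights of the vertices -/
def ht : Fin 12 → ℤ :=
  ![3600, 3600, 3600, 3600, 892, 1333, 1705, 3254, 2472, 3477, 2536, 3259]

/-- the 36 facets; the special facet has index 29 -/
def fc : Fin 36 → Fin 4 → Fin 12 :=
  ![![1, 0, 5, 6],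
    ![1, 0, 6, 9],
    ![0, 3, 4, 8],
    ![0, 3, 8, 9],
    ![0, 4, 5, 9],
    ![4, 0, 8, 9],
    ![0, 5, 6, 9],
    ![3, 1, 4, 6],
    ![3, 1, 6, 8],
    ![1, 3, 7, 8],
    ![4, 1, 5, 6],
    ![1, 6, 8, 10],
    ![6, 1, 9, 10],
    ![7, 1, 8, 11],
    ![8, 1, 10, 11],
    ![1, 9, 10, 11],
    ![2, 4, 5, 6],
    ![4, 2, 5, 9],
    ![2, 4, 6, 10],
    ![2, 4, 7, 9],
    ![4, 2, 7, 11],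
    ![2, 4, 10, 11],
    ![5, 2, 6, 10],
    ![2, 5, 9, 11],
    ![5, 2, 10, 11],
    ![4, 3, 6, 8],
    ![3, 7, 8, 9],
    ![4, 6, 7, 8],
    ![6, 4, 7, 11],
    ![4, 6, 10, 11],
    ![7, 4, 8, 9],
    ![5, 6, 9, 10],
    ![9, 5, 10, 11],
    ![6, 7, 8, 10],
    ![6, 7, 10, 11],
    ![7, 8, 10, 11]]

/-- determinants of the facets (up to a common factor with `fa`) -/
def fd : Fin 36 → ℤ :=
  ![2700, 1260, 4620, 1260, 45780, 181860, 15540, 6300, 2880,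
    660, 35700, 604020, 240420, 11280, 256620, 149460, 239340, 346620,
    10020, 139920, 21840, 5460, 84660, 124020, 780, 100740, 34980,
    443100, 77220, 4140, 941100, 255600, 321480, 117660, 6300, 31620]

/-- adjugate matrices of the facets (up to a common factor) -/
def fa : Fin 36 → Fin 4 → Fin 4 → ℤ :=
  ![![![0, 45, -222, -115], ![45, 0, 87, -140], ![0, 0, -360, 300], ![0, 0, 540, 0]],
    ![![0, 21, 0, -140], ![21, 0, -159, 101], ![0, 0, 0, 210], ![0, 0, 180, -150]],
    ![![77, -147, 30, 0], ![0, -196, -433, 77], ![0, 420, -180, 0], ![0, 0, 660, 0]],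
    ![![21, 350, -159, 0], ![0, -329, 0, 21], ![0, 420, 0, 0], ![0, -420, 180, 0]],
    ![![763, -833, -5777, -245], ![0, -756, 0, 1932], ![0, 2352, 0, -924], ![0, 0, 6540, 0]],
    ![![0, 19740, 0, -1260], ![3031, -16709, -22949, 4291], ![0, -11760, 0, 4620], ![0, 11760, 25980, -4620]],
    ![![259, 499, -1961, -2081], ![0, -420, 0, 2800], ![0, 630, 0, -1610], ![0, -450, 2220, 1150]],
    ![![-140, 0, 126, 105], ![-55, 105, -741, 0], ![300, 0, -540, 0], ![0, 0, 1260, 0]],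
    ![![193, 0, -405, 48], ![-265, 48, 93, 0], ![420, 0, -180, 0], ![-300, 0, 540, 0]],
    ![![-11, 11, 0, 0], ![-163, 0, -4, 11], ![-35, 0, 15, 0], ![220, 0, 0, 0]],
    ![![-540, 0, -1044, 1680], ![-545, 595, -3989, 175], ![1680, 0, -1512, -1260], ![0, 0, 7140, 0]],
    ![![-44533, 10067, -3673, 2747], ![75300, 0, -10920, -3180], ![-9120, 0, 360, 13380], ![-11580, 0, 24300, -2880]],
    ![![420, 0, -3180, 42090], ![287, 4007, -2173, -25333], ![4560, 0, -180, -6690], ![-1260, 0, 9540, -6060]],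
    ![![-11045, 0, 0, 705], ![-2307, 188, -52, 143], ![3760, 0, 0, 0], ![9780, 0, 240, -660]],
    ![![-2820, 0, 0, 5640], ![-21523, 4277, -1183, 1277], ![66270, 0, 0, -4230], ![-37650, 0, 5460, 1590]],
    ![![91, 2491, -689, -24509], ![2820, 0, 0, -5640], ![0, 0, 0, 74730], ![-420, 0, 3180, -42090]],
    ![![545, -595, 3989, -175], ![-2664, -1044, 0, 10956], ![12648, -1512, 0, -8892], ![-6540, 7140, 0, 2100]],
    ![![0, -5724, 0, 14628], ![-763, 833, 5777, 245], ![0, 17808, 0, -6996], ![6540, -7140, 0, -2100]],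
    ![![6197, -763, 167, -4348], ![-1230, 90, 0, 1245], ![11010, -1050, 0, -7845], ![-15810, 1890, 0, 11115]],
    ![![-308, 16912, 2332, -6413], ![0, 12720, 0, 0], ![0, -22260, 0, 8745], ![2640, -5040, 0, 0]],
    ![![1040, 0, 0, 0], ![2024, -1316, 364, -1001], ![-1820, 0, 0, 1365], ![-880, 1680, 0, 0]],
    ![![2467, -329, 91, -1721], ![-156, 0, 0, 312], ![2184, 0, 0, -1638], ![-4404, 420, 0, 3138]],
    ![![4920, -360, 0, -4980], ![-5009, -2249, 1411, 21331], ![-11820, -1200, 0, 39840], ![13320, 5220, 0, -54780]],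
    ![![-273, -7473, 2067, 19947], ![0, 0, 0, 13780], ![2340, 0, 0, -7280], ![0, 9540, 0, -24380]],
    ![![78, 0, 0, -156], ![-305, -47, 13, 1069], ![-351, 0, 0, 1092], ![591, 60, 0, -1992]],
    ![![5300, -960, -1860, 0], ![-3181, 1799, -10681, 1679], ![-1540, 2940, -600, 0], ![1100, -2100, 14820, 0]],
    ![![28, -8667, -212, 583], ![-105, -1750, 795, 0], ![0, 11660, 0, 0], ![660, -660, 0, 0]],
    ![![25896, -5684, 496, -1364], ![-5940, 12460, 160, -440], ![3181, -1799, 10681, -1679], ![-15752, 2408, -3952, 10868]],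
    ![![-4048, 2632, -728, 2002], ![5412, -1128, 312, -858], ![-7953, 987, -273, 5577], ![7876, -1204, 1976, -5434]],
    ![![939, -141, 39, -501], ![-12335, 1645, -455, 8605], ![23859, -2961, 819, -16731], ![-12394, 1526, -334, 8696]],
    ![![-3031, 16709, 22949, -4291], ![-336, 104004, 2544, -6996], ![1232, -67648, -9328, 25652], ![17820, -37380, -480, 1320]],
    ![![-574, -8014, 4346, 50666], ![1379, 13019, -10441, -37561], ![5009, 2249, -1411, -21331], ![-1554, -2994, 11766, 12486]],
    ![![6100, 940, -260, -21380], ![-182, -4982, 1378, 49018], ![819, 22419, -6201, -59841], ![-1379, -13019, 10441, 37561]],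
    ![![53844, -8856, 1104, -3036], ![44533, -10067, 3673, -2747], ![-18728, 3832, -1328, 3652], ![-77688, 17052, -1488, 4092]],
    ![![7916, -1504, 416, -1144], ![-939, 141, -39, 501], ![-16236, 3384, -936, 2574], ![9364, -1916, 664, -1826]],
    ![![21523, -4277, 1183, -1277], ![-7916, 1504, -416, 1144], ![13842, -1128, 312, -858], ![-26922, 4428, -552, 1518]]]

theorem fd_pos : ∀ f, 0 < fd f := by decide +kernel

theorem pc_sum : ∀ v, pc v 0 + pc v 1 + pc v 2 + pc v 3 = 60 := by decide +kernel

theorem pc_nonneg : ∀ v k, 0 ≤ pc v k := by decide +kernel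

theorem pc_inj : ∀ v w, (∀ k, pc v k = pc w k) → v = w := by decide +kernel

theorem fa_left : ∀ f i j, fa f i 0 * pc (fc f j) 0 + fa f i 1 * pc (fc f j) 1 +
    fa f i 2 * pc (fc f j) 2 + fa f i 3 * pc (fc f j) 3 = if i = j then fd f else 0 := by
  decide +kernel

theorem fa_right : ∀ f k l, fa f 0 k * pc (fc f 0) l + fa f 1 k * pc (fc f 1) l +
    fa f 2 k * pc (fc f 2) l + fa f 3 k * pc (fc f 3) l = if k = l then fd f else 0 := by
  decide +kernel

/-- the value of the (scaled) barycentric coordinate at a vertex -/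
def fv (f : Fin 36) (i : Fin 4) (w : Fin 12) : ℤ :=
  fa f i 0 * pc w 0 + fa f i 1 * pc w 1 + fa f i 2 * pc w 2 + fa f i 3 * pc w 3

theorem fa_lower : ∀ f w, (∃ i, fc f i = w) ∨
    fv f 0 w * ht (fc f 0) + fv f 1 w * ht (fc f 1) + fv f 2 w * ht (fc f 2) +
      fv f 3 w * ht (fc f 3) < fd f * ht w := by
  decide +kernel

theorem fa_ridge : ∀ f i, (∃ g, (∀ j, j ≠ i → ∃ k, fc g k = fc f j) ∧ ∀ k, fc g k ≠ fc f i) ∨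
    ∀ k, 0 ≤ fa f i k := by
  decide +kernel

theorem fc_ne : ∀ f, f ≠ 29 → ∃ i, ∀ j, fc 29 j ≠ fc f i := by decide +kernel

/-- four labels, encoded as powers of two, are all different -/
def rb (a b c d : ℕ) : Bool := Nat.beq (a + b + c + d) 15

/-- encoding of labels as powers of two -/
def lbit : Fin 4 → ℕ := ![1, 2, 4, 8]

/-- some facet other than the special one is rainbow -/
def rbAny (x0 x1 x2 x3 x4 x5 x6 x7 x8 x9 x10 x11 : ℕ) : Bool :=
  (rb x1 x0 x5 x6 ||
    (rb x1 x0 x6 x9 ||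
    (rb x0 x3 x4 x8 ||
    (rb x0 x3 x8 x9 ||
    (rb x0 x4 x5 x9 ||
    (rb x4 x0 x8 x9 ||
    (rb x0 x5 x6 x9 ||
    (rb x3 x1 x4 x6 ||
    (rb x3 x1 x6 x8 ||
    (rb x1 x3 x7 x8 ||
    (rb x4 x1 x5 x6 ||
    (rb x1 x6 x8 x10 ||
    (rb x6 x1 x9 x10 ||
    (rb x7 x1 x8 x11 ||
    (rb x8 x1 x10 x11 ||
    (rb x1 x9 x10 x11 ||
    (rb x2 x4 x5 x6 ||
    (rb x4 x2 x5 x9 ||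
    (rb x2 x4 x6 x10 ||
    (rb x2 x4 x7 x9 ||
    (rb x4 x2 x7 x11 ||
    (rb x2 x4 x10 x11 ||
    (rb x5 x2 x6 x10 ||
    (rb x2 x5 x9 x11 ||
    (rb x5 x2 x10 x11 ||
    (rb x4 x3 x6 x8 ||
    (rb x3 x7 x8 x9 ||
    (rb x4 x6 x7 x8 ||
    (rb x6 x4 x7 x11 ||
    (rb x7 x4 x8 x9 ||
    (rb x5 x6 x9 x10 ||
    (rb x9 x5 x10 x11 ||
    (rb x6 x7 x8 x10 ||
    (rb x6 x7 x10 x11 ||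
    (rb x7 x8 x10 x11)))))))))))))))))))))))))))))))))))

theorem rbAny_all :
    (List.all [1, 2, 8] fun x4 =>
      List.all [1, 2, 4, 8] fun x6 =>
      List.all [1, 2, 4, 8] fun x10 =>
      List.all [2, 4] fun x11 =>
      List.all [1, 2, 8] fun x5 =>
      List.all [4, 8] fun x7 =>
      List.all [1, 2, 4, 8] fun x8 =>
      List.all [1, 4] fun x9 =>
      rbAny 1 2 4 8 x4 x5 x6 x7 x8 x9 x10 x11) = true := by
  decide +kernel

theorem rb_aux : ∀ a b c d : Fin 4, rb (lbit a) (lbit b) (lbit c) (lbit d) = true →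
    a ≠ b ∧ a ≠ c ∧ a ≠ d ∧ b ≠ c ∧ b ≠ d ∧ c ≠ d := by decide +kernel

theorem rb_inj (lab : Fin 12 → Fin 4) (f : Fin 36)
    (h : rb (lbit (lab (fc f 0))) (lbit (lab (fc f 1))) (lbit (lab (fc f 2)))
      (lbit (lab (fc f 3))) = true) : ∀ i j, lab (fc f i) = lab (fc f j) → i = j := by
  obtain ⟨h1, h2, h3, h4, h5, h6⟩ := rb_aux _ _ _ _ h
  intro i j hij
  fin_cases i <;> fin_cases j <;> first | rfl | skip
  all_goals first
    | exact absurd hij h1 | exact absurd hij h2 | exact absurd hij h3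
    | exact absurd hij h4 | exact absurd hij h5 | exact absurd hij h6
    | exact absurd hij.symm h1 | exact absurd hij.symm h2 | exact absurd hij.symm h3
    | exact absurd hij.symm h4 | exact absurd hij.symm h5 | exact absurd hij.symm h6

theorem rbAny_sound (lab : Fin 12 → Fin 4)
    (h : rbAny (lbit (lab 0)) (lbit (lab 1)) (lbit (lab 2)) (lbit (lab 3)) (lbit (lab 4))
      (lbit (lab 5)) (lbit (lab 6)) (lbit (lab 7)) (lbit (lab 8)) (lbit (lab 9)) (lbit (lab 10))
      (lbit (lab 11)) = true) :
    ∃ f, f ≠ 29 ∧ ∀ i j, lab (fc f i) = lab (fc f j) → i = j := by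
  simp only [rbAny, Bool.or_eq_true] at h
  rcases h with h | h | h | h | h | h | h | h | h | h | h | h | h | h | h | h | h | h | h | h | h | h | h | h | h | h | h | h | h | h | h | h | h | h | h
  · exact ⟨0, by decide, rb_inj lab 0 h⟩
  · exact ⟨1, by decide, rb_inj lab 1 h⟩
  · exact ⟨2, by decide, rb_inj lab 2 h⟩
  · exact ⟨3, by decide, rb_inj lab 3 h⟩
  · exact ⟨4, by decide, rb_inj lab 4 h⟩
  · exact ⟨5, by decide, rb_inj lab 5 h⟩
  · exact ⟨6, by decide, rb_inj lab 6 h⟩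
  · exact ⟨7, by decide, rb_inj lab 7 h⟩
  · exact ⟨8, by decide, rb_inj lab 8 h⟩
  · exact ⟨9, by decide, rb_inj lab 9 h⟩
  · exact ⟨10, by decide, rb_inj lab 10 h⟩
  · exact ⟨11, by decide, rb_inj lab 11 h⟩
  · exact ⟨12, by decide, rb_inj lab 12 h⟩
  · exact ⟨13, by decide, rb_inj lab 13 h⟩
  · exact ⟨14, by decide, rb_inj lab 14 h⟩
  · exact ⟨15, by decide, rb_inj lab 15 h⟩
  · exact ⟨16, by decide, rb_inj lab 16 h⟩
  · exact ⟨17, by decide, rb_inj lab 17 h⟩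
  · exact ⟨18, by decide, rb_inj lab 18 h⟩
  · exact ⟨19, by decide, rb_inj lab 19 h⟩
  · exact ⟨20, by decide, rb_inj lab 20 h⟩
  · exact ⟨21, by decide, rb_inj lab 21 h⟩
  · exact ⟨22, by decide, rb_inj lab 22 h⟩
  · exact ⟨23, by decide, rb_inj lab 23 h⟩
  · exact ⟨24, by decide, rb_inj lab 24 h⟩
  · exact ⟨25, by decide, rb_inj lab 25 h⟩
  · exact ⟨26, by decide, rb_inj lab 26 h⟩
  · exact ⟨27, by decide, rb_inj lab 27 h⟩
  · exact ⟨28, by decide, rb_inj lab 28 h⟩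
  · exact ⟨30, by decide, rb_inj lab 30 h⟩
  · exact ⟨31, by decide, rb_inj lab 31 h⟩
  · exact ⟨32, by decide, rb_inj lab 32 h⟩
  · exact ⟨33, by decide, rb_inj lab 33 h⟩
  · exact ⟨34, by decide, rb_inj lab 34 h⟩
  · exact ⟨35, by decide, rb_inj lab 35 h⟩

theorem lbit_mem_4 : ∀ k, pc 4 k ≠ 0 → lbit k ∈ ([1, 2, 8] : List ℕ) := by decide +kernel

theorem lbit_mem_6 : ∀ k, pc 6 k ≠ 0 → lbit k ∈ ([1, 2, 4, 8] : List ℕ) := by decide +kernel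

theorem lbit_mem_10 : ∀ k, pc 10 k ≠ 0 → lbit k ∈ ([1, 2, 4, 8] : List ℕ) := by decide +kernel

theorem lbit_mem_11 : ∀ k, pc 11 k ≠ 0 → lbit k ∈ ([2, 4] : List ℕ) := by decide +kernel

theorem lbit_mem_5 : ∀ k, pc 5 k ≠ 0 → lbit k ∈ ([1, 2, 8] : List ℕ) := by decide +kernel

theorem lbit_mem_7 : ∀ k, pc 7 k ≠ 0 → lbit k ∈ ([4, 8] : List ℕ) := by decide +kernel

theorem lbit_mem_8 : ∀ k, pc 8 k ≠ 0 → lbit k ∈ ([1, 2, 4, 8] : List ℕ) := by decide +kernel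

theorem lbit_mem_9 : ∀ k, pc 9 k ≠ 0 → lbit k ∈ ([1, 4] : List ℕ) := by decide +kernel

theorem corner_label : ∀ v : Fin 4, ∀ k : Fin 4,
    pc (v.castLE (by norm_num)) k ≠ 0 → k = v := by decide +kernel

theorem exists_rainbow (lab : Fin 12 → Fin 4) (hlab : ∀ v, pc v (lab v) ≠ 0) :
    ∃ f, f ≠ 29 ∧ ∀ i j, lab (fc f i) = lab (fc f j) → i = j := by
  have h0 : lab 0 = 0 := corner_label 0 _ (hlab 0)
  have h1 : lab 1 = 1 := corner_label 1 _ (hlab 1)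
  have h2 : lab 2 = 2 := corner_label 2 _ (hlab 2)
  have h3 : lab 3 = 3 := corner_label 3 _ (hlab 3)
  apply rbAny_sound
  rw [h0, h1, h2, h3]
  have h := rbAny_all
  replace h := List.all_eq_true.1 h _ (lbit_mem_4 _ (hlab 4))
  replace h := List.all_eq_true.1 h _ (lbit_mem_6 _ (hlab 6))
  replace h := List.all_eq_true.1 h _ (lbit_mem_10 _ (hlab 10))
  replace h := List.all_eq_true.1 h _ (lbit_mem_11 _ (hlab 11))
  replace h := List.all_eq_true.1 h _ (lbit_mem_5 _ (hlab 5))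
  replace h := List.all_eq_true.1 h _ (lbit_mem_7 _ (hlab 7))
  replace h := List.all_eq_true.1 h _ (lbit_mem_8 _ (hlab 8))
  replace h := List.all_eq_true.1 h _ (lbit_mem_9 _ (hlab 9))
  exact h

theorem all_used : ∀ v, ∃ f i, fc f i = v := by decide +kernel

theorem pc_corner : ∀ k l : Fin 4,
    pc (k.castLE (by norm_num)) l = if l = k then 60 else 0 := by decide +kernel

theorem pcR_sum (v : Fin 12) : (pc v 0 : ℝ) + pc v 1 + pc v 2 + pc v 3 = 60 := by
  exact_mod_cast pc_sum v

theorem fdR_pos (f : Fin 36) : (0 : ℝ) < fd f := by exact_mod_cast fd_pos f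

theorem faR_left (f : Fin 36) (i j : Fin 4) :
    (fa f i 0 : ℝ) * pc (fc f j) 0 + fa f i 1 * pc (fc f j) 1 +
    fa f i 2 * pc (fc f j) 2 + fa f i 3 * pc (fc f j) 3 = if i = j then (fd f : ℝ) else 0 := by
  have h := congrArg (Int.cast : ℤ → ℝ) (fa_left f i j)
  push_cast at h
  exact h

theorem faR_right (f : Fin 36) (k l : Fin 4) :
    (fa f 0 k : ℝ) * pc (fc f 0) l + fa f 1 k * pc (fc f 1) l +
    fa f 2 k * pc (fc f 2) l + fa f 3 k * pc (fc f 3) l = if k = l then (fd f : ℝ) else 0 := by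
  have h := congrArg (Int.cast : ℤ → ℝ) (fa_right f k l)
  push_cast at h
  exact h

theorem faR_sum (f : Fin 36) (k : Fin 4) :
    ((fa f 0 k : ℝ) + fa f 1 k + fa f 2 k + fa f 3 k) * 60 = fd f := by
  have h0 := faR_right f k 0
  have h1 := faR_right f k 1
  have h2 := faR_right f k 2
  have h3 := faR_right f k 3
  have e : (if k = 0 then (fd f : ℝ) else 0) + (if k = 1 then (fd f : ℝ) else 0) +
      (if k = 2 then (fd f : ℝ) else 0) + (if k = 3 then (fd f : ℝ) else 0) = fd f := by
    fin_cases k <;> simp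
  linear_combination h0 + h1 + h2 + h3 + e - (fa f 0 k : ℝ) * pcR_sum (fc f 0)
    - (fa f 1 k : ℝ) * pcR_sum (fc f 1) - (fa f 2 k : ℝ) * pcR_sum (fc f 2)
    - (fa f 3 k : ℝ) * pcR_sum (fc f 3)

theorem mem_hull_of_weights {E : Type} [AddCommGroup E] [Module ℝ E] {J : Type} [Fintype J]
    (c : J → ℝ) (p : J → E) (u : Set E) (h0 : ∀ i, 0 ≤ c i) (h1 : ∑ i, c i = 1)
    (hu : ∀ i, c i ≠ 0 → p i ∈ u) : ∑ i, c i • p i ∈ convexHull ℝ u := by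
  classical
  have h1' : ∑ i ∈ Finset.univ.filter (fun i => c i ≠ 0), c i = 1 := by
    rw [Finset.sum_filter_ne_zero, h1]
  have h2 : ∑ i ∈ Finset.univ.filter (fun i => c i ≠ 0), c i • p i = ∑ i, c i • p i := by
    rw [Finset.sum_filter]
    refine Finset.sum_congr rfl fun i _ => ?_
    by_cases h : c i = 0 <;> simp [h]
  rw [← h2]
  refine (convex_convexHull ℝ u).sum_mem (fun i _ => h0 i) h1' fun i hi => ?_
  exact subset_convexHull ℝ u (hu i (Finset.mem_filter.1 hi).2)

section Example

variable {E : Type} [AddCommGroup E] [Module ℝ E] {m : ℕ}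
  (b : AffineBasis (Fin 4 ⊕ Fin m) ℝ E)

/-- weights of the base vertices -/
noncomputable def wt (v : Fin 12) (k : Fin 4) : ℝ := (pc v k : ℝ) / 60

theorem wt_sum (v : Fin 12) : ∑ k, wt v k = 1 := by
  rw [Fin.sum_univ_four]
  unfold wt
  linear_combination pcR_sum v / 60

theorem wt_nonneg (v : Fin 12) (k : Fin 4) : 0 ≤ wt v k := by
  have h : (0 : ℝ) ≤ pc v k := by exact_mod_cast pc_nonneg v k
  unfold wt
  positivity

/-- the vertices of the example: twelve vertices joined with `m` further corners -/
noncomputable def epos : Fin 12 ⊕ Fin m → E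
  | Sum.inl v => ∑ k, wt v k • b (Sum.inl k)
  | Sum.inr j => b (Sum.inr j)

/-- barycentric coordinates of the facets -/
noncomputable def ebc (f : Fin 36) : Fin 4 ⊕ Fin m → (E →ᵃ[ℝ] ℝ)
  | Sum.inl i => ∑ k, (60 * (fa f i k : ℝ) / fd f) • b.coord (Sum.inl k)
  | Sum.inr j => b.coord (Sum.inr j)

theorem affine_sum_coe {J : Type} [Fintype J] (c : J → ℝ) (A : J → (E →ᵃ[ℝ] ℝ)) (x : E) :
    (∑ k, c k • A k) x = ∑ k, c k * A k x := by
  classical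
  induction (Finset.univ : Finset J) using Finset.induction_on with
  | empty => simp
  | insert a s ha ih => simp [Finset.sum_insert ha, ih]

theorem ebc_inl (f : Fin 36) (i : Fin 4) (x : E) :
    ebc b f (Sum.inl i) x = ∑ k, (60 * (fa f i k : ℝ) / fd f) * b.coord (Sum.inl k) x :=
  affine_sum_coe _ _ x

theorem coord_epos_inl (k : Fin 4) (v : Fin 12) :
    b.coord (Sum.inl k) (epos b (Sum.inl v)) = wt v k := by
  unfold epos
  rw [affine_sum_apply _ _ _ (wt_sum v)]
  simp [b.coord_apply]

theorem coord_epos_inr (j : Fin m) (v : Fin 12) :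
    b.coord (Sum.inr j) (epos b (Sum.inl v)) = 0 := by
  unfold epos
  rw [affine_sum_apply _ _ _ (wt_sum v)]
  simp [b.coord_apply]

theorem ebc_epos (f : Fin 36) (i : Fin 4) (w : Fin 12) :
    ebc b f (Sum.inl i) (epos b (Sum.inl w)) = (fv f i w : ℝ) / fd f := by
  rw [ebc_inl]
  simp_rw [coord_epos_inl]
  rw [Fin.sum_univ_four]
  unfold wt fv
  push_cast
  ring

theorem epos_inj : Function.Injective (epos b) := by
  rintro (v | j) (w | k) h
  · congr 1
    apply pc_inj
    intro k
    have h1 := coord_epos_inl b k v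
    rw [h, coord_epos_inl] at h1
    unfold wt at h1
    have : (pc w k : ℝ) = pc v k := by linarith
    exact_mod_cast this.symm
  · have h1 := coord_epos_inr b k v
    rw [h] at h1
    simp [epos] at h1
  · have h1 := coord_epos_inr b j w
    rw [← h] at h1
    simp [epos] at h1
  · have h1 : b.coord (Sum.inr j) (epos b (Sum.inr j)) = 1 := by simp [epos]
    rw [h] at h1
    by_contra hne
    have hne2 : (Sum.inr j : Fin 4 ⊕ Fin m) ≠ Sum.inr k := fun h3 => hne (by
      rw [Sum.inr_injective h3])
    simp only [epos, b.coord_apply, if_neg hne2] at h1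
    norm_num at h1

theorem ebc_corner (f : Fin 36) (i k : Fin 4) :
    ebc b f (Sum.inl i) (b (Sum.inl k)) = 60 * (fa f i k : ℝ) / fd f := by
  rw [ebc_inl]
  simp [b.coord_apply]

theorem ebc_corner' (f : Fin 36) (i : Fin 4) (j : Fin m) :
    ebc b f (Sum.inl i) (b (Sum.inr j)) = 0 := by
  rw [ebc_inl]
  simp [b.coord_apply]

/-- the regular triangulation -/
noncomputable def exampleData :
    RegData E (Fin 12 ⊕ Fin m) (Fin 36) (Fin 4 ⊕ Fin m) (Set.range b) where
  pt := epos b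
  fac f := Sum.map (fc f) id
  bc f := ebc b f
  h := Sum.elim (fun v => (ht v : ℝ)) (fun _ => 0)
  delta := by
    rintro f (i | i) (j | j)
    · simp only [Sum.map_inl, Sum.inl.injEq, ebc_epos]
      have h := faR_left f i j
      have hp := fdR_pos f
      unfold fv
      push_cast
      rw [h]
      split_ifs
      · field_simp
      · simp
    · simp only [Sum.map_inr, id, epos, ebc_corner']
      simp
    · simp only [Sum.map_inl, ebc, coord_epos_inr]
      simp
    · simp only [Sum.map_inr, id, epos, ebc, b.coord_apply]
  sum_one := by
    intro f x
    rw [← b.sum_coord_apply_eq_one x, Fintype.sum_sum_type, Fintype.sum_sum_type]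
    congr 1
    simp_rw [ebc_inl]
    rw [Finset.sum_comm]
    refine Finset.sum_congr rfl fun k _ => ?_
    rw [← Finset.sum_mul, Fin.sum_univ_four]
    have h := faR_sum f k
    have hp := fdR_pos f
    have : 60 * (fa f 0 k : ℝ) / fd f + 60 * (fa f 1 k : ℝ) / fd f + 60 * (fa f 2 k : ℝ) / fd f +
        60 * (fa f 3 k : ℝ) / fd f = 1 := by
      rw [← add_div, ← add_div, ← add_div, div_eq_one_iff_eq hp.ne']
      linear_combination h
    rw [this, one_mul]
  sum_pt := by
    intro f x
    conv_rhs => rw [← b.linear_combination_coord_eq_self x]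
    rw [Fintype.sum_sum_type, Fintype.sum_sum_type]
    congr 1
    simp only [Sum.map_inl, epos, Finset.smul_sum, smul_smul]
    rw [Finset.sum_comm]
    refine Finset.sum_congr rfl fun l _ => ?_
    rw [← Finset.sum_smul]
    congr 1
    simp_rw [ebc_inl, Finset.sum_mul]
    rw [Finset.sum_comm]
    have key : ∀ k, ∑ i, 60 * (fa f i k : ℝ) / fd f * b.coord (Sum.inl k) x * wt (fc f i) l =
        if k = l then b.coord (Sum.inl k) x else 0 := by
      intro k
      have h := faR_right f k l
      have hp := fdR_pos f
      rw [Fin.sum_univ_four]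
      unfold wt
      have e : ∀ i : Fin 4, 60 * (fa f i k : ℝ) / fd f * b.coord (Sum.inl k) x *
          ((pc (fc f i) l : ℝ) / 60) =
          (fa f i k : ℝ) * pc (fc f i) l * (b.coord (Sum.inl k) x / fd f) := by
        intro i
        ring
      rw [e, e, e, e, ← add_mul, ← add_mul, ← add_mul, h]
      split_ifs
      · field_simp
      · simp
    simp_rw [key]
    simp
  lower := by
    rintro f (w | j) hw
    · rw [Fintype.sum_sum_type]
      have h2 : ∑ j : Fin m, ebc b f (Sum.inr j) (epos b (Sum.inl w)) *
          Sum.elim (fun v => (ht v : ℝ)) (fun _ => 0) (Sum.map (fc f) id (Sum.inr j)) = 0 := by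
        simp
      rw [h2, add_zero]
      simp only [Sum.map_inl, Sum.elim_inl, ebc_epos]
      rw [Fin.sum_univ_four]
      have hp := fdR_pos f
      rcases fa_lower f w with ⟨i, hi⟩ | h
      · exact absurd ⟨Sum.inl i, by simp [hi]⟩ hw
      · have h' : (fv f 0 w : ℝ) * ht (fc f 0) + fv f 1 w * ht (fc f 1) + fv f 2 w * ht (fc f 2) +
            fv f 3 w * ht (fc f 3) < fd f * ht w := by exact_mod_cast h
        have e : (fv f 0 w : ℝ) / fd f * ht (fc f 0) + (fv f 1 w : ℝ) / fd f * ht (fc f 1) +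
            (fv f 2 w : ℝ) / fd f * ht (fc f 2) + (fv f 3 w : ℝ) / fd f * ht (fc f 3) =
            ((fv f 0 w : ℝ) * ht (fc f 0) + fv f 1 w * ht (fc f 1) + fv f 2 w * ht (fc f 2) +
            fv f 3 w * ht (fc f 3)) / fd f := by ring
        rw [e, div_lt_iff₀ hp]
        linarith
    · exact absurd ⟨Sum.inr j, by simp⟩ hw
  ridge := by
    rintro f (i | j)
    · rcases fa_ridge f i with ⟨g, hg1, hg2⟩ | h
      · left
        refine ⟨g, ?_, ?_⟩
        · rintro (j | j) hj
          · obtain ⟨k, hk⟩ := hg1 j (fun h => hj (by rw [h]))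
            exact ⟨Sum.inl k, by simp [hk]⟩
          · exact ⟨Sum.inr j, by simp⟩
        · rintro ⟨k | k, hk⟩
          · simp only [Sum.map_inl, Sum.inl.injEq] at hk
            exact hg2 k hk
          · simp at hk
      · right
        rintro _ ⟨k | k, rfl⟩
        · rw [ebc_corner]
          have h1 : (0 : ℝ) ≤ fa f i k := by exact_mod_cast h k
          have hp := fdR_pos f
          positivity
        · rw [ebc_corner']
    · right
      rintro _ ⟨k, rfl⟩
      simp only [ebc, b.coord_apply]
      split_ifs <;> norm_num
  mem := by
    rintro (v | j)
    · exact mem_hull_of_weights _ _ _ (wt_nonneg v) (wt_sum v) fun k _ => ⟨_, rfl⟩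
    · exact subset_convexHull ℝ _ ⟨_, rfl⟩

theorem example_mem_vertices (v : Fin 12 ⊕ Fin m) :
    epos b v ∈ (exampleData b).complex.vertices := by
  refine ⟨Finset.singleton_nonempty _, ?_⟩
  rcases v with v | j
  · obtain ⟨f, i, hfi⟩ := all_used v
    refine ⟨f, ?_⟩
    simp only [Finset.coe_singleton, Set.singleton_subset_iff]
    exact ⟨Sum.inl i, by simp [RegData.q, exampleData, hfi]⟩
  · refine ⟨0, ?_⟩
    simp only [Finset.coe_singleton, Set.singleton_subset_iff]
    exact ⟨Sum.inr j, by simp [RegData.q, exampleData]⟩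

theorem epos_corner (k : Fin 4) :
    epos b (Sum.inl (k.castLE (by norm_num))) = b (Sum.inl k) := by
  simp only [epos, wt, pc_corner]
  rw [Finset.sum_eq_single k]
  · simp
  · intro l _ hl
    simp [hl]
  · simp

end Example

/-- the triangulation of the `(m+3)`-simplex -/
noncomputable def exampleT (m : ℕ)
    (b : AffineBasis (Fin 4 ⊕ Fin m) ℝ (EuclideanSpace ℝ (Fin (m + 3))))
    (e : Fin 4 ⊕ Fin m ≃ Fin (m + 3 + 1)) : SimplexTriangulation (m + 3) where
  K := (exampleData b).complex
  corner := fun i => b (e.symm i)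
  indep := b.ind.comp_embedding e.symm.toEmbedding
  finite := (exampleData b).complex_finite
  space_eq := by
    rw [(exampleData b).complex_space]
    congr 1
    exact (e.symm.surjective.range_comp b).symm

theorem main_aux (m : ℕ)
    (b : AffineBasis (Fin 4 ⊕ Fin m) ℝ (EuclideanSpace ℝ (Fin (m + 3))))
    (e : Fin 4 ⊕ Fin m ≃ Fin (m + 3 + 1)) :
    ∃ T : SimplexTriangulation (m + 3), (∀ i, T.corner i ∈ T.K.vertices) ∧ ∃ σ, T.IsFacet σ ∧
      (∀ l : EuclideanSpace ℝ (Fin (m + 3)) → Fin (m + 3 + 1), T.IsSperner l →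
        ∃ τ, T.IsFacet τ ∧ τ ≠ σ ∧ Rainbow l τ) := by
  classical
  have hfac : ∀ f, (exampleT m b e).IsFacet (Finset.univ.image ((exampleData b).q f)) := by
    intro f
    refine ⟨⟨Finset.univ_nonempty.image _, f, by simp⟩, ?_⟩
    rw [Finset.card_image_of_injective _ ((exampleData b).q_inj f), Finset.card_univ,
      Fintype.card_congr e, Fintype.card_fin]
  have hcor : ∀ a : Fin 4 ⊕ Fin m, ∃ v, epos b v = b a := by
    rintro (k | j)
    · exact ⟨_, epos_corner b k⟩
    · exact ⟨Sum.inr j, rfl⟩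
  refine ⟨exampleT m b e, ?_, Finset.univ.image ((exampleData b).q 29), hfac 29, ?_⟩
  · intro i
    obtain ⟨v, hv⟩ := hcor (e.symm i)
    have : (exampleT m b e).corner i = epos b v := hv.symm
    rw [this]
    exact example_mem_vertices b v
  · intro l hl
    have hlab : ∀ v : Fin 12, ∃ k : Fin 4, pc v k ≠ 0 ∧ l (epos b (Sum.inl v)) = e (Sum.inl k) := by
      intro v
      obtain ⟨i, ⟨k, hk, rfl⟩, hi⟩ := hl.2 (epos b (Sum.inl v)) (example_mem_vertices b _)
        {i | ∃ k, pc v k ≠ 0 ∧ e (Sum.inl k) = i} (by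
          refine mem_hull_of_weights _ _ _ (wt_nonneg v) (wt_sum v) fun k hk => ?_
          refine ⟨e (Sum.inl k), ⟨k, ?_, rfl⟩, ?_⟩
          · intro h0
            apply hk
            simp [wt, h0]
          · simp [exampleT])
      exact ⟨k, hk, hi⟩
    choose lab hlab1 hlab2 using hlab
    have hj : ∀ j : Fin m, l (epos b (Sum.inr j)) = e (Sum.inr j) := by
      intro j
      have h1 := hl.1 (e (Sum.inr j))
      have h2 : (exampleT m b e).corner (e (Sum.inr j)) = epos b (Sum.inr j) := by
        simp [exampleT, epos]
      rwa [h2] at h1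
    obtain ⟨f, hf, hinj⟩ := exists_rainbow lab hlab1
    refine ⟨_, hfac f, ?_, ?_⟩
    · intro heq
      obtain ⟨i, hi⟩ := fc_ne f hf
      have h1 : (exampleData b).q f (Sum.inl i) ∈ Finset.univ.image ((exampleData b).q 29) := by
        rw [← heq]
        exact Finset.mem_image_of_mem _ (Finset.mem_univ _)
      obtain ⟨a, -, ha⟩ := Finset.mem_image.1 h1
      have h2 : Sum.map (fc 29) id a = Sum.map (fc f) id (Sum.inl i) := epos_inj b ha
      rcases a with j | j
      · exact hi j (Sum.inl_injective h2)
      · exact absurd h2 Sum.inr_ne_inl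
    · have hg : ∀ a, l ((exampleData b).q f a) = e (Sum.map (fun i => lab (fc f i)) id a) := by
        rintro (i | j)
        · exact hlab2 (fc f i)
        · exact hj j
      intro x hx y hy hxy
      simp only [Finset.coe_image, Finset.coe_univ, Set.image_univ, Set.mem_range] at hx hy
      obtain ⟨a, rfl⟩ := hx
      obtain ⟨c, rfl⟩ := hy
      rw [hg, hg] at hxy
      have h3 := e.injective hxy
      have h4 : Function.Injective (Sum.map (fun i => lab (fc f i)) (id : Fin m → Fin m)) :=
        Function.Injective.sumMap (fun i j => hinj i j) Function.injective_id
      rw [h4 h3]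

/-- Theorem 1.4 / Theorem 3.4: for every `d ≥ 3` there is a finite triangulation
`K` of `Δ^d` and a facet `σ` of `K` such that every Sperner labelling of `K` has
a rainbow facet distinct from `σ`; consequently Gallai's graph `G_K` is
`(d+2)`-chromatic but not `(d+2)`-critical. -/
theorem exists_noncritical_sperner_triangulation (d : ℕ) (hd : 3 ≤ d) :
    ∃ T : SimplexTriangulation d, ∃ σ, T.IsFacet σ ∧
      (∀ l : EuclideanSpace ℝ (Fin d) → Fin (d + 1), T.IsSperner l →
        ∃ τ, T.IsFacet τ ∧ τ ≠ σ ∧ Rainbow l τ) ∧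
      (T.GallaiGraph).chromaticNumber = (d + 2 : ℕ) ∧
      ¬ ((T.GallaiGraph).Colorable (d + 2) ∧
          ¬ (T.GallaiGraph).Colorable (d + 1) ∧
          ∀ e ∈ (T.GallaiGraph).edgeSet,
            ((T.GallaiGraph).deleteEdges {e}).Colorable (d + 1)) := by
  obtain ⟨m, rfl⟩ : ∃ m, d = m + 3 := ⟨d - 3, by omega⟩
  have e : Fin 4 ⊕ Fin m ≃ Fin (m + 3 + 1) := Fintype.equivOfCardEq (by simp; omega)
  obtain ⟨b⟩ : Nonempty (AffineBasis (Fin 4 ⊕ Fin m) ℝ (EuclideanSpace ℝ (Fin (m + 3)))) := by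
    apply AffineBasis.exists_affineBasis_of_finiteDimensional
    simp
    omega
  obtain ⟨T, hc, σ, hσ, hS⟩ := main_aux m b e
  exact ⟨T, σ, hσ, hS, gallai_part T hc σ hσ hS⟩
end
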